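/- arXiv:1310.2777 — 2 statements merged into one kernel-verified Lean document; each statement's English description precedes it below -/
import Mathlib

section
/- Strongly derived unboundedness is invariant under derived equivalence: if A and B are derived equivalent finite-dimensional algebras and A is strongly derived unbounded, then so is B. -/
/-!
STATEMENT 13: Strongly derived unboundedness is invariant under derived equivalence:
if `A` and `B` are derived equivalent finite-dimensional algebras and `A` is strongly
derived unbounded, then so is `B`.
-/

open CategoryTheory Limits

universe u
variable (k : Type u) [Field k] [IsAlgClosed k]

section Defs

variable (R : Type u) [Ring R] [Algebra k R] [FiniteDimensional k R]
  [HasDerivedCategory.{u} (ModuleCat.{u} R)]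

/-- The `i`-th cohomology of an object of the derived category. -/
noncomputable def Hobj (i : ℤ) (X : DerivedCategory (ModuleCat.{u} R)) : ModuleCat R :=
  (DerivedCategory.homologyFunctor (ModuleCat R) i).obj X

/-- `dim_k H^i(X)`. -/
noncomputable def hdim (i : ℤ) (X : DerivedCategory (ModuleCat.{u} R)) : ℕ :=
  Module.finrank k ((ModuleCat.restrictScalars (algebraMap k R)).obj (Hobj R i X))

/-- The cohomological length `hl(X) = max_i dim_k H^i(X)`. -/
noncomputable def hl (X : DerivedCategory (ModuleCat.{u} R)) : ℕ :=
  sSup (Set.range fun i : ℤ => hdim k R i X)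

/-- The cohomological width `hw(X) = max { j - i + 1 | H^i(X) ≠ 0 ≠ H^j(X) }`. -/
noncomputable def hw (X : DerivedCategory (ModuleCat.{u} R)) : ℕ :=
  sSup {n : ℕ | ∃ i j : ℤ, ¬ IsZero (Hobj R i X) ∧ ¬ IsZero (Hobj R j X) ∧ (n : ℤ) = j - i + 1}

/-- The cohomological range `hr(X) = hw(X) · hl(X)`. -/
noncomputable def hr (X : DerivedCategory (ModuleCat.{u} R)) : ℕ := hw R X * hl k R X

/-- An object of an additive category is indecomposable iff it is nonzero and its only
idempotent endomorphisms are `0` and the identity. -/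
def Indec {D : Type*} [Category D] [Limits.HasZeroMorphisms D] (X : D) : Prop :=
  ¬ IsZero X ∧ ∀ e : X ⟶ X, e ≫ e = e → e = 0 ∨ e = 𝟙 X

/-- `X` has bounded cohomology, i.e. `X` lies in `D^b`. -/
def Bdd (X : DerivedCategory (ModuleCat.{u} R)) : Prop :=
  ∃ a b : ℤ, ∀ i : ℤ, (i < a ∨ b < i) → IsZero (Hobj R i X)

/-- All cohomologies of `X` are finite dimensional over `k`, i.e. `X` lies in the
bounded derived category of finite-dimensional modules. -/
def FinCoh (X : DerivedCategory (ModuleCat.{u} R)) : Prop :=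
  ∀ i : ℤ, FiniteDimensional k
    ((ModuleCat.restrictScalars (algebraMap k R)).obj (Hobj R i X))

/-- Objects of `D^b(mod R)` (bounded, finite-dimensional cohomology). -/
def InDb (X : DerivedCategory (ModuleCat.{u} R)) : Prop := Bdd R X ∧ FinCoh k R X

/-- The global cohomological length `gl.hl R`, as a value in `ℕ∞`. -/
noncomputable def glhl : ℕ∞ :=
  ⨆ X : {X : DerivedCategory (ModuleCat.{u} R) // Indec X ∧ InDb k R X}, (hl k R X.1 : ℕ∞)

/-- The global cohomological width `gl.hw R`, as a value in `ℕ∞`. -/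
noncomputable def glhw : ℕ∞ :=
  ⨆ X : {X : DerivedCategory (ModuleCat.{u} R) // Indec X ∧ InDb k R X}, (hw R X.1 : ℕ∞)

/-- The global cohomological range `gl.hr R`, as a value in `ℕ∞`. -/
noncomputable def glhr : ℕ∞ :=
  ⨆ X : {X : DerivedCategory (ModuleCat.{u} R) // Indec X ∧ InDb k R X}, (hr k R X.1 : ℕ∞)

/-- `R` is strongly derived unbounded: there is an infinite strictly increasing sequence
`(rᵢ)` such that for each `i` there are infinitely many indecomposable objects of
`D^b(mod R)` of cohomological range `rᵢ`, pairwise distinct up to shift and isomorphism. -/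
def StronglyDerivedUnbounded : Prop :=
  ∃ r : ℕ → ℕ, StrictMono r ∧ ∀ i : ℕ, ∃ X : ℕ → DerivedCategory (ModuleCat.{u} R),
    (∀ j : ℕ, Indec (X j) ∧ InDb k R (X j) ∧ hr k R (X j) = r i) ∧
    (∀ j j' : ℕ, j ≠ j' → ∀ n : ℤ, IsEmpty (X j ≅ (X j')⟦n⟧))

end Defs

namespace SDU
section Cplx
variable {R : Type u} [Ring R]

/-- The cycle `z` represents the cohomology class `x`. -/
def Rep (K : CochainComplex (ModuleCat.{u} R) ℤ) (n : ℤ) (z : K.X n) (x : K.homology n) : Prop :=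
  ∃ c : K.cycles n, K.iCycles n c = z ∧ K.homologyπ n c = x

variable {K L : CochainComplex (ModuleCat.{u} R) ℤ} {n : ℤ}

lemma iCycles_inj {c c' : K.cycles n} (h : K.iCycles n c = K.iCycles n c') : c = c' :=
  (ModuleCat.mono_iff_injective (K.iCycles n)).1 inferInstance h

lemma Rep.exists (x : K.homology n) : ∃ z, Rep K n z x := by
  obtain ⟨c, hc⟩ := (ModuleCat.epi_iff_surjective (K.homologyπ n)).1 inferInstance x
  exact ⟨_, c, rfl, hc⟩

lemma Rep.d_eq {z : K.X n} {x} (h : Rep K n z x) (m : ℤ) : K.d n m z = 0 := by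
  obtain ⟨c, rfl, _⟩ := h
  rw [← ConcreteCategory.comp_apply, K.iCycles_d]; rfl

lemma Rep.of_cycle {z : K.X n} (h : K.d n (n+1) z = 0) : ∃ x, Rep K n z x := by
  refine ⟨K.homologyπ n (K.cyclesMk (C := ModuleCat R) z (n+1) (by simp) h), _, ?_, rfl⟩
  exact K.i_cyclesMk (C := ModuleCat R) z (n+1) (by simp) h

lemma Rep.unique {z : K.X n} {x x'} (h : Rep K n z x) (h' : Rep K n z x') : x = x' := by
  obtain ⟨c, rfl, rfl⟩ := h
  obtain ⟨c', hc, rfl⟩ := h'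
  rw [iCycles_inj hc]

lemma Rep.map (f : K ⟶ L) {z : K.X n} {x} (h : Rep K n z x) :
    Rep L n (f.f n z) (HomologicalComplex.homologyMap f n x) := by
  obtain ⟨c, rfl, rfl⟩ := h
  refine ⟨HomologicalComplex.cyclesMap f n c, ?_, ?_⟩
  · simp only [← ConcreteCategory.comp_apply, HomologicalComplex.cyclesMap_i]
  · simp only [← ConcreteCategory.comp_apply, HomologicalComplex.homologyπ_naturality]

lemma Rep.zero_iff {z : K.X n} {x} (h : Rep K n z x) :
    x = 0 ↔ ∃ w : K.X (n-1), K.d (n-1) n w = z := by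
  obtain ⟨c, rfl, rfl⟩ := h
  constructor
  · intro h0
    have ex : (ShortComplex.mk (K.toCycles (n-1) n) (K.homologyπ n)
        (K.toCycles_comp_homologyπ _ _)).Exact :=
      ShortComplex.exact_of_g_is_cokernel _ (K.homologyIsCokernel (n-1) n (by simp))
    rw [ShortComplex.moduleCat_exact_iff] at ex
    obtain ⟨w, hw⟩ := ex c h0
    refine ⟨w, ?_⟩
    rw [← hw]
    simp only [← ConcreteCategory.comp_apply, HomologicalComplex.toCycles_i]
  · rintro ⟨w, hw⟩
    have : K.toCycles (n-1) n w = c := iCycles_inj (by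
      rw [← hw]; simp only [← ConcreteCategory.comp_apply, HomologicalComplex.toCycles_i])
    rw [← this, ← ConcreteCategory.comp_apply, K.toCycles_comp_homologyπ]; rfl

variable {J : Type u}

/-- direct sum of complexes -/
noncomputable def dsum (K : J → CochainComplex (ModuleCat.{u} R) ℤ) :
    CochainComplex (ModuleCat.{u} R) ℤ where
  X n := ModuleCat.of R (Π₀ j, (K j).X n)
  d n m := ModuleCat.ofHom (DFinsupp.mapRange.linearMap fun j => ((K j).d n m).hom)
  shape n m h := by
    ext x j
    simp [(K j).shape n m h]
  d_comp_d' n m l _ _ := by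
    ext x j
    exact ConcreteCategory.congr_hom ((K j).d_comp_d n m l) (x j)

/-- product of complexes -/
noncomputable def dprod (K : J → CochainComplex (ModuleCat.{u} R) ℤ) :
    CochainComplex (ModuleCat.{u} R) ℤ where
  X n := ModuleCat.of R (∀ j, (K j).X n)
  d n m := ModuleCat.ofHom (LinearMap.pi fun j => ((K j).d n m).hom ∘ₗ LinearMap.proj j)
  shape n m h := by
    ext x j
    exact ConcreteCategory.congr_hom ((K j).shape n m h) (x j)
  d_comp_d' n m l _ _ := by
    ext x j
    exact ConcreteCategory.congr_hom ((K j).d_comp_d n m l) (x j)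

variable (K : J → CochainComplex (ModuleCat.{u} R) ℤ)

open Classical in
noncomputable def dι (j : J) : K j ⟶ dsum K where
  f n := ModuleCat.ofHom (DFinsupp.lsingle (R := R) (M := fun j => (K j).X n) j)
  comm' n m _ := by
    ext x
    exact DFinsupp.mapRange_single (β₁ := fun j => (K j).X n) (β₂ := fun j => (K j).X m)
      (f := fun j => ((K j).d n m).hom) (hf := fun j => map_zero _)

noncomputable def dπ (j : J) : dsum K ⟶ K j where
  f n := ModuleCat.ofHom (DFinsupp.lapply j)
  comm' n m _ := by
    ext x
    rfl

noncomputable def pπ (j : J) : dprod K ⟶ K j where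
  f n := ModuleCat.ofHom (LinearMap.proj j)
  comm' n m _ := by
    ext x
    rfl

noncomputable def plift (f : ∀ j, L ⟶ K j) : L ⟶ dprod K where
  f n := ModuleCat.ofHom (LinearMap.pi fun j => ((f j).f n).hom)
  comm' n m _ := by
    ext x; funext j
    exact ConcreteCategory.congr_hom ((f j).comm n m) x

@[simp] lemma plift_π (f : ∀ j, L ⟶ K j) (j : J) : plift K f ≫ pπ K j = f j := by
  ext n x; rfl

lemma dsum_ext {f g : dsum K ⟶ L} (h : ∀ j, dι K j ≫ f = dι K j ≫ g) : f = g := by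
  ext n : 2
  classical
  refine DFinsupp.lhom_ext' fun j => ?_
  ext x
  have := ConcreteCategory.congr_hom (congrArg (fun t => HomologicalComplex.Hom.f t n) (h j)) x
  exact this

open Classical in
noncomputable def ddesc (f : ∀ j, K j ⟶ L) : dsum K ⟶ L where
  f n := ModuleCat.ofHom (DFinsupp.lsum ℕ fun j => ((f j).f n).hom)
  comm' n m _ := by
    ext : 1
    refine DFinsupp.lhom_ext' fun j => ?_
    ext x
    have := ConcreteCategory.congr_hom ((f j).comm n m) x
    simp only [ConcreteCategory.comp_apply] at this
    simp [dsum]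
    exact this

@[simp] lemma dι_desc (f : ∀ j, K j ⟶ L) (j : J) : dι K j ≫ ddesc K f = f j := by
  classical
  ext n x
  refine (DFinsupp.sumAddHom_single (fun j => ((f j).f n).hom.toAddMonoidHom) j x : _)

lemma dι_dπ (j : J) : dι K j ≫ dπ K j = 𝟙 _ := by
  classical
  ext n x
  exact DFinsupp.single_eq_same (β := fun j => (K j).X n) (i := j) (b := x)

lemma dι_dπ_ne {i j : J} (h : i ≠ j) : dι K i ≫ dπ K j = 0 := by
  classical
  ext n x
  exact DFinsupp.single_eq_of_ne (β := fun j => (K j).X n) (b := x) h.symm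

/-- every class in the cohomology of a direct sum is a finite sum -/
lemma dsum_homology (n : ℤ) (x : (dsum K).homology n) : ∃ s : Finset J,
    x = ∑ j ∈ s, HomologicalComplex.homologyMap (dι K j) n
      (HomologicalComplex.homologyMap (dπ K j) n x) := by
  classical
  obtain ⟨z, hz⟩ := Rep.exists x
  let z' : Π₀ j, (K j).X n := z
  refine ⟨z'.support, ?_⟩
  let e : dsum K ⟶ dsum K := ∑ j ∈ z'.support, dπ K j ≫ dι K j
  have h1 : e.f n z = z := by
    refine DFinsupp.ext fun i => ?_
    have : e.f n z = ∑ j ∈ z'.support, DFinsupp.single j (z' j) := by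
      simp only [e]
      have := (HomologicalComplex.eval (ModuleCat R) (ComplexShape.up ℤ) n).map_sum
        (fun j => dπ K j ≫ dι K j) z'.support
      refine (ConcreteCategory.congr_hom this z).trans ?_
      refine (DFunLike.congr_fun (ModuleCat.hom_sum _ _) z).trans ?_
      rw [LinearMap.sum_apply]
      refine Finset.sum_congr rfl fun j _ => ?_
      rfl
    rw [this]
    exact DFunLike.congr_fun (DFinsupp.sum_single (f := z')) i
  have h2 := hz.map e
  rw [h1] at h2
  have h3 := hz.unique h2
  have h4 : HomologicalComplex.homologyMap e n = ∑ j ∈ z'.support,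
      HomologicalComplex.homologyMap (dπ K j) n ≫ HomologicalComplex.homologyMap (dι K j) n := by
    simp only [← HomologicalComplex.homologyMap_comp]
    exact (HomologicalComplex.homologyFunctor (ModuleCat R) (ComplexShape.up ℤ) n).map_sum _ _
  rw [h4] at h3
  conv_lhs => rw [h3]
  refine (DFunLike.congr_fun (ModuleCat.hom_sum _ _) x).trans ?_
  rw [LinearMap.sum_apply]
  rfl


lemma quasiIso_iff_bij {M : CochainComplex (ModuleCat.{u} R) ℤ} (f : L ⟶ M) : 
   QuasiIso f ↔ ∀ n, Function.Bijective (HomologicalComplex.homologyMap f n) := by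
  rw [quasiIso_iff]
  refine forall_congr' fun n => ?_
  rw [quasiIsoAt_iff_isIso_homologyMap, ConcreteCategory.isIso_iff_bijective]

variable {K} {K' : J → CochainComplex (ModuleCat.{u} R) ℤ}

lemma homologyMap_comp_apply {L M N : CochainComplex (ModuleCat.{u} R) ℤ} (f : L ⟶ M) (g : M ⟶ N)
    (n : ℤ) (x : L.homology n) : HomologicalComplex.homologyMap g n
      (HomologicalComplex.homologyMap f n x) = HomologicalComplex.homologyMap (f ≫ g) n x := by
  rw [HomologicalComplex.homologyMap_comp]; rfl

/-- functoriality -/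
noncomputable def dmap (f : ∀ j, K j ⟶ K' j) : dsum K ⟶ dsum K' :=
  ddesc K fun j => f j ≫ dι K' j

lemma dmap_π (f : ∀ j, K j ⟶ K' j) (j : J) : dmap f ≫ dπ K' j = dπ K j ≫ f j := by
  apply dsum_ext
  intro i
  rw [← Category.assoc, ← Category.assoc, dmap, dι_desc, Category.assoc]
  by_cases h : i = j
  · subst h
    rw [dι_dπ, dι_dπ, Category.comp_id, Category.id_comp]
  · rw [dι_dπ_ne K' h, dι_dπ_ne K h, comp_zero, zero_comp]

lemma quasiIso_dmap (f : ∀ j, K j ⟶ K' j) (hf : ∀ j, QuasiIso (f j)) : QuasiIso (dmap f) := by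
  rw [quasiIso_iff_bij]
  intro n
  have hf' := fun j => (quasiIso_iff_bij (f j)).1 (hf j) n
  constructor
  · rw [injective_iff_map_eq_zero]
    intro x hx
    obtain ⟨s, hs⟩ := dsum_homology K n x
    rw [hs]
    refine Finset.sum_eq_zero fun j _ => ?_
    have : HomologicalComplex.homologyMap (dπ K j) n x = 0 := by
      apply (injective_iff_map_eq_zero _).1 (hf' j).1
      rw [homologyMap_comp_apply, ← dmap_π, ← homologyMap_comp_apply, hx, map_zero]
    rw [this, map_zero]
  · intro y
    obtain ⟨s, hs⟩ := dsum_homology K' n y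
    choose x hx using fun j => (hf' j).2 (HomologicalComplex.homologyMap (dπ K' j) n y)
    refine ⟨∑ j ∈ s, HomologicalComplex.homologyMap (dι K j) n (x j), ?_⟩
    rw [map_sum]
    conv_rhs => rw [hs]
    refine Finset.sum_congr rfl fun j _ => ?_
    rw [homologyMap_comp_apply, ← hx, homologyMap_comp_apply, dmap, dι_desc]

noncomputable def pmap (f : ∀ j, K j ⟶ K' j) : dprod K ⟶ dprod K' :=
  plift K' fun j => pπ K j ≫ f j

lemma dprod_homology_zero (n : ℤ) (x : (dprod K).homology n)
    (h : ∀ j, HomologicalComplex.homologyMap (pπ K j) n x = 0) : x = 0 := by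
  obtain ⟨z, hz⟩ := Rep.exists x
  rw [hz.zero_iff]
  have := fun j => ((hz.map (pπ K j)).zero_iff).1 (h j)
  choose w hw using this
  exact ⟨w, funext hw⟩

lemma dprod_homology_surj (n : ℤ) (y : ∀ j, (K j).homology n) : ∃ x : (dprod K).homology n,
    ∀ j, HomologicalComplex.homologyMap (pπ K j) n x = y j := by
  choose z hz using fun j => Rep.exists (y j)
  let z' : (dprod K).X n := z
  obtain ⟨x, hx⟩ : ∃ x, Rep (dprod K) n z' x :=
    Rep.of_cycle (funext fun j => (hz j).d_eq (n+1))
  exact ⟨x, fun j => (hx.map (pπ K j)).unique (hz j)⟩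

lemma quasiIso_pmap (f : ∀ j, K j ⟶ K' j) (hf : ∀ j, QuasiIso (f j)) : QuasiIso (pmap f) := by
  rw [quasiIso_iff_bij]
  intro n
  have hf' := fun j => (quasiIso_iff_bij (f j)).1 (hf j) n
  constructor
  · rw [injective_iff_map_eq_zero]
    intro x hx
    apply dprod_homology_zero
    intro j
    apply (injective_iff_map_eq_zero _).1 (hf' j).1
    have h : pπ K j ≫ f j = pmap f ≫ pπ K' j := by simp [pmap]
    rw [homologyMap_comp_apply, h, ← homologyMap_comp_apply, hx, map_zero]
  · intro y
    choose x hx using fun j => (hf' j).2 (HomologicalComplex.homologyMap (pπ K' j) n y)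
    obtain ⟨x', hx'⟩ := dprod_homology_surj n x
    refine ⟨x', ?_⟩
    rw [← sub_eq_zero]
    apply dprod_homology_zero
    intro j
    rw [map_sub, homologyMap_comp_apply, pmap, plift_π, ← homologyMap_comp_apply, hx', hx, sub_self]

end Cplx
end SDU

namespace SDU
section Der
variable {R : Type u} [Ring R] [HasDerivedCategory.{u} (ModuleCat.{u} R)]

/-- the cohomology functor -/
noncomputable abbrev HH (R : Type u) [Ring R] [HasDerivedCategory.{u} (ModuleCat.{u} R)] (n : ℤ) :
    DerivedCategory (ModuleCat.{u} R) ⥤ ModuleCat.{u} R :=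
  DerivedCategory.homologyFunctor (ModuleCat.{u} R) n

lemma HH_comp {X Y Z : DerivedCategory (ModuleCat.{u} R)} (n : ℤ) (f : X ⟶ Y) (g : Y ⟶ Z)
    (x : (HH R n).obj X) : (HH R n).map (f ≫ g) x = (HH R n).map g ((HH R n).map f x) := by
  rw [Functor.map_comp]; rfl

lemma HH_id {X : DerivedCategory (ModuleCat.{u} R)} (n : ℤ) 
    (x : (HH R n).obj X) : (HH R n).map (𝟙 X) x = x := by
  rw [CategoryTheory.Functor.map_id]; rfl

lemma factors_nat {K L : CochainComplex (ModuleCat.{u} R) ℤ} (f : K ⟶ L) (n : ℤ)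
    (x : (HH R n).obj (DerivedCategory.Q.obj K)) :
    (DerivedCategory.homologyFunctorFactors (ModuleCat.{u} R) n).hom.app L
      ((HH R n).map (DerivedCategory.Q.map f) x) =
    HomologicalComplex.homologyMap f n
      ((DerivedCategory.homologyFunctorFactors (ModuleCat.{u} R) n).hom.app K x) := by
  exact ConcreteCategory.congr_hom
    ((DerivedCategory.homologyFunctorFactors (ModuleCat.{u} R) n).hom.naturality f) x

lemma factors_inj {K : CochainComplex (ModuleCat.{u} R) ℤ} (n : ℤ) :
    Function.Injective
    ((DerivedCategory.homologyFunctorFactors (ModuleCat.{u} R) n).hom.app K) := 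
  ((ConcreteCategory.isIso_iff_bijective _).1 inferInstance).1

lemma factors_surj {K : CochainComplex (ModuleCat.{u} R) ℤ} (n : ℤ) :
    Function.Surjective
    ((DerivedCategory.homologyFunctorFactors (ModuleCat.{u} R) n).hom.app K) := 
  ((ConcreteCategory.isIso_iff_bijective _).1 inferInstance).2

variable {J : Type u}

lemma Q_dsum_homology (K : J → CochainComplex (ModuleCat.{u} R) ℤ) (n : ℤ)
    (x : (HH R n).obj (DerivedCategory.Q.obj (dsum K))) : ∃ s : Finset J,
    x = ∑ j ∈ s, (HH R n).map (DerivedCategory.Q.map (dι K j))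
      ((HH R n).map (DerivedCategory.Q.map (dπ K j)) x) := by
  obtain ⟨s, hs⟩ := dsum_homology K n
    ((DerivedCategory.homologyFunctorFactors (ModuleCat.{u} R) n).hom.app _ x)
  refine ⟨s, factors_inj n ?_⟩
  rw [hs, map_sum]
  refine Finset.sum_congr rfl fun j _ => ?_
  rw [factors_nat, factors_nat]

lemma exists_desc (K : J → CochainComplex (ModuleCat.{u} R) ℤ)
    (Y : DerivedCategory (ModuleCat.{u} R)) (f : ∀ j, DerivedCategory.Q.obj (K j) ⟶ Y) :
    ∃ g : DerivedCategory.Q.obj (dsum K) ⟶ Y,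
      ∀ j, DerivedCategory.Q.map (dι K j) ≫ g = f j := by
  let L := DerivedCategory.Q.objPreimage Y
  let e : DerivedCategory.Q.obj L ≅ Y := DerivedCategory.Q.objObjPreimageIso Y
  choose K' s hs g hg using fun j => DerivedCategory.right_fac (f j ≫ e.inv)
  have h1 : IsIso (DerivedCategory.Q.map (dmap s)) := by
    rw [DerivedCategory.isIso_Q_map_iff_quasiIso]
    exact quasiIso_dmap s fun j => (DerivedCategory.isIso_Q_map_iff_quasiIso _ _).1 (hs j)
  refine ⟨inv (DerivedCategory.Q.map (dmap s)) ≫ DerivedCategory.Q.map (ddesc K' g) ≫ e.hom, ?_⟩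
  intro j
  have h2 : DerivedCategory.Q.map (dι K j) ≫ inv (DerivedCategory.Q.map (dmap s)) =
      inv (DerivedCategory.Q.map (s j)) ≫ DerivedCategory.Q.map (dι K' j) := by
    rw [IsIso.comp_inv_eq, Category.assoc, IsIso.eq_inv_comp, ← Functor.map_comp,
      ← Functor.map_comp, dmap, dι_desc]
  rw [← Category.assoc, h2, Category.assoc, ← Category.assoc (DerivedCategory.Q.map (dι K' j)),
    ← Functor.map_comp, dι_desc, ← Category.assoc, ← hg, Category.assoc, e.inv_hom_id,
    Category.comp_id]

lemma exists_lift (K : J → CochainComplex (ModuleCat.{u} R) ℤ)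
    (Y : DerivedCategory (ModuleCat.{u} R)) (f : ∀ j, Y ⟶ DerivedCategory.Q.obj (K j)) :
    ∃ g : Y ⟶ DerivedCategory.Q.obj (dprod K),
      ∀ j, g ≫ DerivedCategory.Q.map (pπ K j) = f j := by
  let L := DerivedCategory.Q.objPreimage Y
  let e : DerivedCategory.Q.obj L ≅ Y := DerivedCategory.Q.objObjPreimageIso Y
  choose K' g s hs hg using fun j => DerivedCategory.left_fac (e.hom ≫ f j)
  have h1 : IsIso (DerivedCategory.Q.map (pmap s)) := by
    rw [DerivedCategory.isIso_Q_map_iff_quasiIso]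
    exact quasiIso_pmap s fun j => (DerivedCategory.isIso_Q_map_iff_quasiIso _ _).1 (hs j)
  refine ⟨e.inv ≫ DerivedCategory.Q.map (plift K' g) ≫ inv (DerivedCategory.Q.map (pmap s)), ?_⟩
  intro j
  have h2 : inv (DerivedCategory.Q.map (pmap s)) ≫ DerivedCategory.Q.map (pπ K j) =
      DerivedCategory.Q.map (pπ K' j) ≫ inv (DerivedCategory.Q.map (s j)) := by
    rw [IsIso.inv_comp_eq, ← Category.assoc, IsIso.eq_comp_inv, ← Functor.map_comp,
      ← Functor.map_comp, pmap, plift_π]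
  rw [Category.assoc, Category.assoc, h2, ← Category.assoc (DerivedCategory.Q.map (plift K' g)),
    ← Functor.map_comp, plift_π, ← hg, ← Category.assoc, e.inv_hom_id,
    Category.id_comp]

lemma desc_unique (K : J → CochainComplex (ModuleCat.{u} R) ℤ)
    (Y : DerivedCategory (ModuleCat.{u} R)) (f : DerivedCategory.Q.obj (dsum K) ⟶ Y)
    (hf : ∀ j, DerivedCategory.Q.map (dι K j) ≫ f = 0) : f = 0 := by
  obtain ⟨N, n, h, hT⟩ := Pretriangulated.distinguished_cocone_triangle₁ f
  choose l hl using fun j => Pretriangulated.Triangle.coyoneda_exact₂ _ hT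
    (DerivedCategory.Q.map (dι K j)) (hf j)
  obtain ⟨g, hg⟩ := exists_desc K N l
  have hfix : ∀ (m : ℤ) x, (HH R m).map (g ≫ n) x = x := by
    intro m x
    obtain ⟨s, hs⟩ := Q_dsum_homology K m x
    rw [hs, map_sum]
    refine Finset.sum_congr rfl fun j _ => ?_
    rw [← HH_comp, ← Category.assoc, hg]
    exact congrArg (fun t => (HH R m).map t _) (hl j).symm
  have hiso : IsIso (g ≫ n) := by
    rw [DerivedCategory.isIso_iff]
    intro m
    have : (HH R m).map (g ≫ n) = 𝟙 _ := by
      ext x; exact hfix m x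
    change IsIso ((HH R m).map (g ≫ n))
    rw [this]; infer_instance
  have hn : n ≫ f = 0 := Pretriangulated.comp_distTriang_mor_zero₁₂ _ hT
  have : (g ≫ n) ≫ f = 0 := by rw [Category.assoc, hn, comp_zero]
  rw [← IsIso.inv_hom_id_assoc (g ≫ n) f, this, comp_zero]

end Der
end SDU

namespace SDU
section Der
variable {R : Type u} [Ring R] [HasDerivedCategory.{u} (ModuleCat.{u} R)]

lemma Rep.smul {K : CochainComplex (ModuleCat.{u} R) ℤ} {n : ℤ} {z : K.X n} {x} (h : Rep K n z x)
    (b : R) : Rep K n (b • z) (b • x) := by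
  obtain ⟨c, rfl, rfl⟩ := h
  exact ⟨b • c, map_smul _ _ _, map_smul _ _ _⟩

/-- the free module of rank one as a complex -/
noncomputable abbrev PC (R : Type u) [Ring R] : CochainComplex (ModuleCat.{u} R) ℤ :=
  (HomologicalComplex.single (ModuleCat.{u} R) (ComplexShape.up ℤ) 0).obj (ModuleCat.of R R)

noncomputable def one0 (R : Type u) [Ring R] : (PC R).X 0 :=
  (HomologicalComplex.singleObjXSelf (ComplexShape.up ℤ) (0:ℤ) (ModuleCat.of R R)).inv (1 : R)

lemma exists_smul_one0 (z : (PC R).X 0) : ∃ b : R, z = b • one0 R := by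
  let e := HomologicalComplex.singleObjXSelf (ComplexShape.up ℤ) (0:ℤ) (ModuleCat.of R R)
  let b : R := e.hom z
  refine ⟨b, ?_⟩
  have h1 : e.inv (e.hom z) = z := by rw [← ConcreteCategory.comp_apply, e.hom_inv_id]; rfl
  rw [one0, ← map_smul, ← h1]
  congr 1
  exact (mul_one b).symm

lemma one0_rep : ∃ x, Rep (PC R) 0 (one0 R) x := by
  refine Rep.of_cycle ?_
  rw [HomologicalComplex.single_obj_d]
  rfl

variable (R) in
lemma exists_unit : ∃ o : (HH R 0).obj (DerivedCategory.Q.obj (PC R)),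
    (∀ x, ∃ b : R, x = b • o) ∧
    ∀ (Y : DerivedCategory (ModuleCat.{u} R)) (y : (HH R 0).obj Y),
      ∃ f : DerivedCategory.Q.obj (PC R) ⟶ Y, (HH R 0).map f o = y := by
  obtain ⟨o', ho'⟩ := one0_rep (R := R)
  obtain ⟨o, rfl⟩ := factors_surj 0 o'
  refine ⟨o, ?_, ?_⟩
  · intro x
    obtain ⟨z, hz⟩ := Rep.exists
      ((DerivedCategory.homologyFunctorFactors (ModuleCat.{u} R) 0).hom.app _ x)
    obtain ⟨b, rfl⟩ := exists_smul_one0 z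
    refine ⟨b, factors_inj 0 ?_⟩
    exact hz.unique (by rw [map_smul]; exact ho'.smul b)
  · intro Y y
    let L := DerivedCategory.Q.objPreimage Y
    let e : DerivedCategory.Q.obj L ≅ Y := DerivedCategory.Q.objObjPreimageIso Y
    let y' := (HH R 0).map e.inv y
    obtain ⟨z, hz⟩ := Rep.exists
      ((DerivedCategory.homologyFunctorFactors (ModuleCat.{u} R) 0).hom.app _ y')
    let φ : ModuleCat.of R R ⟶ L.X 0 := ModuleCat.ofHom (LinearMap.toSpanSingleton R _ z)
    let g : PC R ⟶ L := HomologicalComplex.mkHomFromSingle φ (by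
      intro m _
      ext
      have := hz.d_eq m
      simp [φ]
      exact this)
    have hg : g.f 0 (one0 R) = z := by
      simp only [g, HomologicalComplex.mkHomFromSingle_f, one0]
      rw [← ConcreteCategory.comp_apply, Iso.inv_hom_id_assoc]
      exact one_smul R z
    refine ⟨DerivedCategory.Q.map g ≫ e.hom, ?_⟩
    have h1 : (HH R 0).map (DerivedCategory.Q.map g) o = y' := by
      apply factors_inj 0
      rw [factors_nat]
      exact (hg ▸ ho'.map g).unique hz
    rw [HH_comp, h1, ← HH_comp, e.inv_hom_id, HH_id]

end Der
end SDU

namespace SDU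
section Fun
variable {A : Type u} [Ring A] [HasDerivedCategory.{u} (ModuleCat.{u} A)]
variable {B : Type u} [Ring B] [HasDerivedCategory.{u} (ModuleCat.{u} B)]
variable (F : DerivedCategory (ModuleCat.{u} A) ⥤ DerivedCategory (ModuleCat.{u} B))
  [F.IsEquivalence]
variable {J I : Type u}

lemma F_dsum (K : J → CochainComplex (ModuleCat.{u} A) ℤ) (n : ℤ)
    (x : (HH B n).obj (F.obj (DerivedCategory.Q.obj (dsum K)))) :
    ∃ (s : Finset J) (w : ∀ j, (HH B n).obj (F.obj (DerivedCategory.Q.obj (K j)))),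
    x = ∑ j ∈ s, (HH B n).map (F.map (DerivedCategory.Q.map (dι K j))) (w j) := by
  let L : J → CochainComplex (ModuleCat.{u} B) ℤ :=
    fun j => DerivedCategory.Q.objPreimage (F.obj (DerivedCategory.Q.obj (K j)))
  let eL : ∀ j, DerivedCategory.Q.obj (L j) ≅ F.obj (DerivedCategory.Q.obj (K j)) :=
    fun j => DerivedCategory.Q.objObjPreimageIso _
  let Z := DerivedCategory.Q.obj (dsum L)
  let e : F.obj (F.objPreimage Z) ≅ Z := F.objObjPreimageIso Z
  obtain ⟨φ', hφ'⟩ := exists_desc K (F.objPreimage Z)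
    (fun j => F.preimage ((eL j).inv ≫ DerivedCategory.Q.map (dι L j) ≫ e.inv))
  obtain ⟨ψ, hψ⟩ := exists_desc L (F.obj (DerivedCategory.Q.obj (dsum K)))
    (fun j => (eL j).hom ≫ F.map (DerivedCategory.Q.map (dι K j)))
  let φ : F.obj (DerivedCategory.Q.obj (dsum K)) ⟶ Z := F.map φ' ≫ e.hom
  have hφ : ∀ j, F.map (DerivedCategory.Q.map (dι K j)) ≫ φ =
      (eL j).inv ≫ DerivedCategory.Q.map (dι L j) := by
    intro j
    rw [← Category.assoc, ← F.map_comp, hφ', F.map_preimage, Category.assoc, Category.assoc,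
      e.inv_hom_id, Category.comp_id]
  have hid : φ ≫ ψ = 𝟙 _ := by
    have h0 : F.preimage (φ ≫ ψ) - 𝟙 _ = 0 := by
      apply desc_unique
      intro j
      rw [Preadditive.comp_sub, Category.comp_id, sub_eq_zero]
      apply F.map_injective
      rw [F.map_comp, F.map_preimage, ← Category.assoc, hφ, Category.assoc, hψ,
        Iso.inv_hom_id_assoc]
    rw [sub_eq_zero] at h0
    rw [← F.map_preimage (φ ≫ ψ), h0, F.map_id]
  obtain ⟨s, hs⟩ := Q_dsum_homology L n ((HH B n).map φ x)
  refine ⟨s, fun j => (HH B n).map (eL j).hom ((HH B n).map (DerivedCategory.Q.map (dπ L j))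
    ((HH B n).map φ x)), ?_⟩
  have h1 : x = (HH B n).map ψ ((HH B n).map φ x) := by rw [← HH_comp, hid, HH_id]
  conv_lhs => rw [h1, hs, map_sum]
  refine Finset.sum_congr rfl fun j _ => ?_
  rw [← HH_comp _ (eL j).hom, ← hψ, HH_comp _ (DerivedCategory.Q.map (dι L j)) ψ]

lemma F_dprod (K : I → CochainComplex (ModuleCat.{u} A) ℤ)
    (y : ∀ i, (HH B 0).obj (F.obj (DerivedCategory.Q.obj (K i)))) :
    ∃ x : (HH B 0).obj (F.obj (DerivedCategory.Q.obj (dprod K))),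
    ∀ i, (HH B 0).map (F.map (DerivedCategory.Q.map (pπ K i))) x = y i := by
  obtain ⟨o, -, ho⟩ := exists_unit B
  choose v hv using fun i => ho _ (y i)
  let e := F.objObjPreimageIso (DerivedCategory.Q.obj (PC B))
  obtain ⟨v', hv'⟩ := exists_lift K _ (fun i => F.preimage (e.hom ≫ v i))
  refine ⟨(HH B 0).map (e.inv ≫ F.map v') o, fun i => ?_⟩
  rw [← HH_comp, Category.assoc, ← F.map_comp, hv', F.map_preimage, e.inv_hom_id_assoc, hv]

lemma F_sum_prod (K : J → CochainComplex (ModuleCat.{u} A) ℤ)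
    (K' : I → CochainComplex (ModuleCat.{u} A) ℤ) (θ : dsum K ⟶ dprod K')
    (hθ : ∀ n, Function.Bijective (θ.f n))
    (y : ∀ i, (HH B 0).obj (F.obj (DerivedCategory.Q.obj (K' i)))) :
    ∃ (s : Finset J) (w : ∀ j, (HH B 0).obj (F.obj (DerivedCategory.Q.obj (K j)))),
    ∀ i, y i = ∑ j ∈ s, (HH B 0).map
      (F.map (DerivedCategory.Q.map (dι K j ≫ θ ≫ pπ K' i))) (w j) := by
  have h1 : ∀ n, IsIso (θ.f n) := fun n => (ConcreteCategory.isIso_iff_bijective _).2 (hθ n)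
  have h2 : IsIso θ := HomologicalComplex.Hom.isIso_of_components θ
  obtain ⟨x, hx⟩ := F_dprod F K' y
  obtain ⟨s, w, hs⟩ := F_dsum F K 0 ((HH B 0).map (F.map (DerivedCategory.Q.map (inv θ))) x)
  refine ⟨s, w, fun i => ?_⟩
  have h3 : x = (HH B 0).map (F.map (DerivedCategory.Q.map θ))
      ((HH B 0).map (F.map (DerivedCategory.Q.map (inv θ))) x) := by
    rw [← HH_comp, ← F.map_comp, ← DerivedCategory.Q.map_comp, IsIso.inv_hom_id,
      CategoryTheory.Functor.map_id, CategoryTheory.Functor.map_id, HH_id]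
  rw [← hx, h3, hs, map_sum, map_sum]
  refine Finset.sum_congr rfl fun j _ => ?_
  rw [← HH_comp, ← HH_comp]
  simp only [Functor.map_comp, Category.assoc]

end Fun
end SDU

namespace SDU

lemma bij_of_basis {k : Type u} [Field k] {V : Type u} [AddCommGroup V] [Module k V]
    [FiniteDimensional k V] {I J : Type u} [DecidableEq J] (w : Module.Basis J k (I → k))
    (T : (Π₀ _ : J, V) →+ (I → V))
    (hT : ∀ j v i, T (DFinsupp.single j v) i = w j i • v) : Function.Bijective T := by
  classical
  have hT' : ∀ v i, T v i = ∑ j ∈ v.support, w j i • v j := by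
    intro v i
    conv_lhs => rw [← DFinsupp.sum_single (f := v)]
    rw [DFinsupp.sum, map_sum, Finset.sum_apply]
    exact Finset.sum_congr rfl fun j _ => hT _ _ _
  constructor
  · rw [injective_iff_map_eq_zero]
    intro v hv
    ext j
    rw [DFinsupp.zero_apply, ← Module.forall_dual_apply_eq_zero_iff k]
    intro l
    by_cases hj : j ∈ v.support
    · have h1 : ∑ j ∈ v.support, l (v j) • w j = 0 := by
        ext i
        have := congrArg l ((hT' v i).symm.trans (congrFun hv i))
        simpa [mul_comm] using this
      exact linearIndependent_iff'.1 w.linearIndependent _ _ h1 j hj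
    · simp at hj; simp [hj]
  · intro y
    let b := Module.finBasis k V
    refine ⟨∑ c, ∑ j ∈ (w.repr fun i => b.repr (y i) c).support,
      DFinsupp.single j ((w.repr fun i => b.repr (y i) c) j • b c), ?_⟩
    ext i
    rw [map_sum, Finset.sum_apply]
    conv_rhs => rw [← b.sum_repr (y i)]
    refine Finset.sum_congr rfl fun c _ => ?_
    rw [map_sum, Finset.sum_apply]
    have h2 := congrFun (w.linearCombination_repr fun i => b.repr (y i) c) i
    rw [Finsupp.linearCombination_apply, Finsupp.sum, Finset.sum_apply] at h2
    rw [← h2, Finset.sum_smul]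
    refine Finset.sum_congr rfl fun j _ => ?_
    rw [hT, smul_smul]
    simp [mul_comm]

section Fun
variable (k : Type u) [Field k]
variable {A : Type u} [Ring A] [Algebra k A] [HasDerivedCategory.{u} (ModuleCat.{u} A)]
variable {B : Type u} [Ring B] [HasDerivedCategory.{u} (ModuleCat.{u} B)]
variable (F : DerivedCategory (ModuleCat.{u} A) ⥤ DerivedCategory (ModuleCat.{u} B))
  [F.IsEquivalence]

lemma exists_smul (X : DerivedCategory (ModuleCat.{u} A)) (c : k) (x : (HH B 0).obj (F.obj X)) :
    ∃ b : B, (HH B 0).map (F.map (c • 𝟙 X)) x = b • x := by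
  obtain ⟨o, ho, ho'⟩ := exists_unit B
  obtain ⟨f, rfl⟩ := ho' _ x
  let e := F.objObjPreimageIso (DerivedCategory.Q.obj (PC B))
  let f' := F.preimage (e.hom ≫ f)
  have hf' : F.map f' = e.hom ≫ f := F.map_preimage _
  obtain ⟨b, hb⟩ := ho ((HH B 0).map (e.inv ≫ F.map (c • 𝟙 _) ≫ e.hom) o)
  have h1 : f ≫ F.map (c • 𝟙 X) = (e.inv ≫ F.map (c • 𝟙 _) ≫ e.hom) ≫ f := by
    rw [Category.assoc, Category.assoc, ← hf', ← F.map_comp, Linear.smul_comp, Category.id_comp,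
      ← Category.comp_id f', ← Linear.comp_smul, F.map_comp, hf', Category.assoc,
      e.inv_hom_id_assoc]
  refine ⟨b, ?_⟩
  rw [← HH_comp, h1, HH_comp, hb, map_smul]

open ModuleCat in
lemma finite_F0 [FiniteDimensional k A] (K : CochainComplex (ModuleCat.{u} A) ℤ)
    (hK : ∀ n, Module.Finite A (K.X n)) :
    Module.Finite B ((HH B 0).obj (F.obj (DerivedCategory.Q.obj K))) := by
  classical
  let I : Type u := (HH B 0).obj (F.obj (DerivedCategory.Q.obj K))
  obtain ⟨J, ⟨w⟩⟩ : ∃ J : Type u, Nonempty (Module.Basis J k (I → k)) :=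
    ⟨_, ⟨Module.Basis.ofVectorSpace k (I → k)⟩⟩
  let θ : dsum (fun _ : J => K) ⟶ dprod (fun _ : I => K) :=
    ddesc _ fun j => plift _ fun i => w j i • 𝟙 K
  have hθ : ∀ n, Function.Bijective (θ.f n) := by
    intro n
    have : FiniteDimensional k (K.X n) := Module.Finite.trans A _
    refine bij_of_basis (k := k) (V := K.X n) w (θ.f n).hom.toAddMonoidHom ?_
    intro j v i
    have h1 : dι (fun _ : J => K) j ≫ θ ≫ pπ (fun _ : I => K) i = w j i • 𝟙 K := by
      rw [← Category.assoc, dι_desc, plift_π]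
    have h2 := ConcreteCategory.congr_hom (congrArg (fun t => HomologicalComplex.Hom.f t n) h1) v
    exact h2
  obtain ⟨s, u, hs⟩ := F_sum_prod F _ _ θ hθ (fun i => i)
  refine ⟨s.image u, ?_⟩
  rw [eq_top_iff]
  intro v _
  rw [hs v]
  refine Submodule.sum_mem _ fun j hj => ?_
  have h1 : dι (fun _ : J => K) j ≫ θ ≫ pπ (fun _ : I => K) v = w j v • 𝟙 K := by
    rw [← Category.assoc, dι_desc, plift_π]
  rw [h1, Functor.map_smul, CategoryTheory.Functor.map_id]
  obtain ⟨b, hb⟩ := exists_smul k F _ (w j v) (u j)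
  rw [hb]
  exact Submodule.smul_mem _ _ (Submodule.subset_span (Finset.mem_coe.2 (Finset.mem_image_of_mem u hj)))

end Fun
end SDU

namespace SDU

section
variable {R : Type u} [Ring R] {J : Type u} (K : J → CochainComplex (ModuleCat.{u} R) ℤ)

noncomputable def dsp : dsum K ⟶ dprod K where
  f n := ModuleCat.ofHom (X := Π₀ j, (K j).X n) (Y := ∀ j, (K j).X n)
    { toFun := fun v j => v j, map_add' := fun _ _ => rfl, map_smul' := fun _ _ => rfl }
  comm' n m _ := by
    ext x
    rfl

lemma dsp_comp (i j : J) : dι K i ≫ dsp K ≫ pπ K j = dι K i ≫ dπ K j := rfl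

lemma dsp_bij (n : ℤ) (j₀ : J) (h : ∀ j ≠ j₀, Subsingleton ((K j).X n)) :
    Function.Bijective ((dsp K).f n) := by
  classical
  constructor
  · intro v v' hv
    exact DFinsupp.ext fun j => congrFun hv j
  · intro y
    refine ⟨DFinsupp.single (β := fun j => (K j).X n) j₀ (y j₀), ?_⟩
    funext j
    by_cases hj : j = j₀
    · subst hj
      exact DFinsupp.single_eq_same (β := fun j => (K j).X n)
    · have := h j hj
      exact Subsingleton.elim _ _

end

section
variable {R : Type u} [Ring R] [HasDerivedCategory.{u} (ModuleCat.{u} R)]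

noncomputable def HHshift (X : DerivedCategory (ModuleCat.{u} R)) (n m : ℤ) :
    (HH R m).obj (X⟦n⟧) ≅ (HH R (n + m)).obj X :=
  ((HH R 0).shiftIso n m (n + m) rfl).app X

end

section Fun
variable {A : Type u} [Ring A] [HasDerivedCategory.{u} (ModuleCat.{u} A)]
variable {B : Type u} [Ring B] [HasDerivedCategory.{u} (ModuleCat.{u} B)]
variable (F : DerivedCategory (ModuleCat.{u} A) ⥤ DerivedCategory (ModuleCat.{u} B))
  [F.IsEquivalence] [F.CommShift ℤ]

noncomputable def Fshift (K : CochainComplex (ModuleCat.{u} A) ℤ) (n : ℤ) :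
    (HH B 0).obj (F.obj (DerivedCategory.Q.obj (K⟦n⟧))) ≅ 
    (HH B n).obj (F.obj (DerivedCategory.Q.obj K)) :=
  (HH B 0).mapIso (F.mapIso ((DerivedCategory.Q.commShiftIso n).app K) ≪≫
    (F.commShiftIso n).app (DerivedCategory.Q.obj K)) ≪≫ HHshift _ n 0 ≪≫ 
      eqToIso (by rw [add_zero])

lemma finite_supp (K : CochainComplex (ModuleCat.{u} A) ℤ)
    (hK : ∀ n ≠ 0, Subsingleton (K.X n)) :
    ∃ s : Finset ℤ, ∀ n ∉ s, IsZero ((HH B n).obj (F.obj (DerivedCategory.Q.obj K))) := by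
  classical
  let L : ULift.{u} ℤ → CochainComplex (ModuleCat.{u} A) ℤ := fun i => K⟦i.down⟧
  have hb : ∀ n, Function.Bijective ((dsp L).f n) := by
    intro n
    refine dsp_bij L n ⟨-n⟩ fun j hj => hK _ ?_
    intro h
    apply hj
    ext
    have : n + j.down = 0 := h
    show j.down = - n
    lia
  let y : ∀ i, (HH B 0).obj (F.obj (DerivedCategory.Q.obj (L i))) := fun i =>
    if h : ∃ y : (HH B 0).obj (F.obj (DerivedCategory.Q.obj (L i))), y ≠ 0 then h.choose else 0
  have hy : ∀ i, y i = 0 → Subsingleton ((HH B 0).obj (F.obj (DerivedCategory.Q.obj (L i)))) := by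
    intro i hi
    by_cases h : ∃ y : (HH B 0).obj (F.obj (DerivedCategory.Q.obj (L i))), y ≠ 0
    · simp only [y, dif_pos h] at hi
      exact absurd hi h.choose_spec
    · push Not at h
      exact ⟨fun a b => (h a).trans (h b).symm⟩
  obtain ⟨s, w, hs⟩ := F_sum_prod F L L (dsp L) hb y
  refine ⟨s.image ULift.down, fun n hn => ?_⟩
  have h0 : y ⟨n⟩ = 0 := by
    rw [hs]
    refine Finset.sum_eq_zero fun j hj => ?_
    rw [dsp_comp, dι_dπ_ne, Functor.map_zero, Functor.map_zero, Functor.map_zero]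
    · rfl
    · rintro rfl
      exact hn (Finset.mem_image_of_mem _ hj)
  have h1 := hy _ h0
  exact IsZero.of_iso (ModuleCat.isZero_of_subsingleton _) (Fshift F K n).symm

lemma finite_F (k : Type u) [Field k] [Algebra k A] [FiniteDimensional k A]
    (K : CochainComplex (ModuleCat.{u} A) ℤ)
    (hK : ∀ n, Module.Finite A (K.X n)) (n : ℤ) :
    Module.Finite B ((HH B n).obj (F.obj (DerivedCategory.Q.obj K))) := by
  have := finite_F0 k F (K⟦n⟧) (fun m => hK (m + n))
  exact Module.Finite.equiv (Fshift F K n).toLinearEquiv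

end Fun
end SDU

namespace SDU

section Mods
variable (k : Type u) [Field k] {R : Type u} [Ring R] [Algebra k R]

/-- the `k`-length of an `R`-module -/
noncomputable def len (M : ModuleCat.{u} R) : ℕ∞ :=
  Module.length k ((ModuleCat.restrictScalars (algebraMap k R)).obj M)

lemma len_mono {M N : ModuleCat.{u} R} (f : M ⟶ N) (hf : Mono f) : len k M ≤ len k N :=
  Module.length_le_of_injective ((ModuleCat.restrictScalars (algebraMap k R)).map f).hom
    ((ModuleCat.mono_iff_injective f).1 hf)

lemma len_epi {M N : ModuleCat.{u} R} (f : M ⟶ N) (hf : Epi f) : len k N ≤ len k M :=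
  Module.length_le_of_surjective ((ModuleCat.restrictScalars (algebraMap k R)).map f).hom
    ((ModuleCat.epi_iff_surjective f).1 hf)

lemma len_iso {M N : ModuleCat.{u} R} (e : M ≅ N) : len k M = len k N :=
  le_antisymm (len_mono k e.hom inferInstance) (len_mono k e.inv inferInstance)

lemma len_eq_zero {M : ModuleCat.{u} R} : len k M = 0 ↔ IsZero M := by
  rw [len, Module.length_eq_zero_iff]
  exact (ModuleCat.isZero_iff_subsingleton (M := M)).symm

lemma len_exact (S : ShortComplex (ModuleCat.{u} R)) (hS : S.Exact) :
    len k S.X₂ ≤ len k S.X₁ + len k S.X₃ := by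
  let f := ((ModuleCat.restrictScalars (algebraMap k R)).map S.f).hom
  let g := ((ModuleCat.restrictScalars (algebraMap k R)).map S.g).hom
  have h : Function.Exact f g := by
    rw [ShortComplex.moduleCat_exact_iff] at hS
    intro x
    constructor
    · intro hx
      obtain ⟨y, hy⟩ := hS x hx
      exact ⟨y, hy⟩
    · rintro ⟨y, rfl⟩
      exact ConcreteCategory.congr_hom S.zero y
  have h1 := Module.length_eq_add_of_exact (LinearMap.ker g).subtype g.rangeRestrict
    (Submodule.subtype_injective _) (LinearMap.surjective_rangeRestrict _) (by
      rw [LinearMap.exact_iff, LinearMap.ker_rangeRestrict, Submodule.range_subtype])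
  have h2 : Module.length k (LinearMap.ker g) ≤ len k S.X₁ := by
    rw [h.linearMap_ker_eq]
    exact Module.length_le_of_surjective f.rangeRestrict (LinearMap.surjective_rangeRestrict _)
  have h3 : Module.length k (LinearMap.range g) ≤ len k S.X₃ :=
    Module.length_le_of_injective (LinearMap.range g).subtype (Submodule.subtype_injective _)
  calc len k S.X₂ = _ := h1
    _ ≤ _ := add_le_add h2 h3

lemma length_le_len (M : ModuleCat.{u} R) : Module.length R M ≤ len k M := by
  let N := (ModuleCat.restrictScalars (algebraMap k R)).obj M
  let _ : Module R N := inferInstanceAs (Module R M)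
  have : IsScalarTower k R N := ⟨fun c r x => by
    have := mul_smul (algebraMap k R c) r (x : M)
    rw [Algebra.smul_def]
    exact this⟩
  have := Submodule.length_le_length_restrictScalars (R := R) (M := N) k ⊤
  rw [Submodule.restrictScalars_top, Module.length_top] at this
  exact this.trans_eq Module.length_top

lemma len_ne_top_iff (M : ModuleCat.{u} R) : len k M ≠ ⊤ ↔
    FiniteDimensional k ((ModuleCat.restrictScalars (algebraMap k R)).obj M) := by
  rw [len, Module.length_ne_top_iff, isFiniteLength_iff_isNoetherian_isArtinian]
  constructor
  · rintro ⟨h, -⟩; infer_instance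
  · intro h; exact ⟨inferInstance, inferInstance⟩

lemma len_eq_finrank (M : ModuleCat.{u} R) (h : len k M ≠ ⊤) : len k M =
    Module.finrank k ((ModuleCat.restrictScalars (algebraMap k R)).obj M) := by
  rw [len_ne_top_iff] at h
  exact Module.length_eq_finrank k _

lemma len_ne_top_of_finite [FiniteDimensional k R] (M : ModuleCat.{u} R) [Module.Finite R M] :
    len k M ≠ ⊤ := by
  rw [len_ne_top_iff]
  let N := (ModuleCat.restrictScalars (algebraMap k R)).obj M
  let _ : Module R N := inferInstanceAs (Module R M)
  have : Module.Finite R N := inferInstanceAs (Module.Finite R M)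
  have : IsScalarTower k R N := ⟨fun c r x => by
    have := mul_smul (algebraMap k R c) r (x : M)
    rw [Algebra.smul_def]
    exact this⟩
  exact Module.Finite.trans R N

variable (R) in
/-- the semisimple module `R / rad R` -/
noncomputable abbrev S0 : ModuleCat.{u} R := ModuleCat.of R (R ⧸ (Ring.jacobson R : Submodule R R))

lemma simple_retract (K : Type u) [Field K] {R : Type u} [Ring R] [Algebra K R]
    [FiniteDimensional K R] (S : Type u) [AddCommGroup S] [Module R S]
    [IsSimpleModule R S] : ∃ (i : ModuleCat.of R S ⟶ S0 R) (r : S0 R ⟶ ModuleCat.of R S),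
      i ≫ r = 𝟙 _ := by
  have hA : IsArtinianRing R := IsArtinianRing.of_finite K R
  have hs : IsSemisimpleModule R (R ⧸ (Ring.jacobson R : Submodule R R)) := by
    rw [IsArtinian.isSemisimpleModule_iff_jacobson]
    exact Module.jacobson_quotient_jacobson R R
  have hn : Nontrivial S := IsSimpleModule.nontrivial R S
  obtain ⟨m, hm⟩ := exists_ne (0 : S)
  let q : (R ⧸ (Ring.jacobson R : Submodule R R)) →ₗ[R] S :=
    Submodule.liftQ _ (LinearMap.toSpanSingleton R S m) (IsSemisimpleModule.jacobson_le_ker _ _ _ _ _)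
  have hq : Function.Surjective q := by
    intro s
    obtain ⟨r, hr⟩ := IsSimpleModule.toSpanSingleton_surjective R hm s
    exact ⟨Submodule.Quotient.mk r, hr⟩
  obtain ⟨i, hi⟩ := IsSemisimpleModule.lifting_property q hq LinearMap.id
  exact ⟨ModuleCat.ofHom i, ModuleCat.ofHom q, by ext x; exact DFunLike.congr_fun hi x⟩

end Mods
end SDU

namespace SDU
open Pretriangulated

section Dev
variable (k : Type u) [Field k]
variable {A : Type u} [Ring A] [Algebra k A] [FiniteDimensional k A]
  [HasDerivedCategory.{u} (ModuleCat.{u} A)]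
variable {B : Type u} [Ring B] [Algebra k B] [HasDerivedCategory.{u} (ModuleCat.{u} B)]
variable (F : DerivedCategory (ModuleCat.{u} A) ⥤ DerivedCategory (ModuleCat.{u} B))
  [F.CommShift ℤ] [F.IsTriangulated]

/-- `dim_k H^i(F(M[0]))` -/
noncomputable def dF (i : ℤ) (M : ModuleCat.{u} A) : ℕ∞ :=
  len k ((HH B i).obj (F.obj ((DerivedCategory.singleFunctor (ModuleCat.{u} A) 0).obj M)))

lemma dist_le (T : Triangle (DerivedCategory (ModuleCat.{u} A))) (hT : T ∈ distTriang _) (i : ℤ) :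
    len k ((HH B i).obj (F.obj T.obj₂)) ≤
      len k ((HH B i).obj (F.obj T.obj₁)) + len k ((HH B i).obj (F.obj T.obj₃)) :=
  len_exact k _ (DerivedCategory.HomologySequence.exact₂ _ (F.map_distinguished T hT) i)

lemma dF_simple (i : ℤ) (S : Type u) [AddCommGroup S] [Module A S]
    [IsSimpleModule A S] : dF k F i (ModuleCat.of A S) ≤ dF k F i (S0 A) := by
  obtain ⟨f, r, h⟩ := simple_retract (R := A) k S
  refine len_mono k ((HH B i).map (F.map ((DerivedCategory.singleFunctor _ 0).map f))) ?_
  have : SplitMono ((HH B i).map (F.map ((DerivedCategory.singleFunctor _ 0).map f))) :=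
    ⟨(HH B i).map (F.map ((DerivedCategory.singleFunctor _ 0).map r)), by
      simp only [← Functor.map_comp, h, CategoryTheory.Functor.map_id]⟩
  exact this.mono

lemma dF_ext (i : ℤ) (M : Type u) [AddCommGroup M] [Module A M] (N : Submodule A M) :
    dF k F i (ModuleCat.of A M) ≤ dF k F i (ModuleCat.of A N) +
      dF k F i (ModuleCat.of A (M ⧸ N)) := by
  let S : ShortComplex (ModuleCat.{u} A) :=
    ShortComplex.mk (ModuleCat.ofHom N.subtype) (ModuleCat.ofHom N.mkQ) (by
      ext x
      exact (Submodule.Quotient.mk_eq_zero N).2 x.2)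
  have hS : S.ShortExact := ShortComplex.ShortExact.mk' (by
      rw [ShortComplex.moduleCat_exact_iff]
      intro x hx
      exact ⟨⟨x, (Submodule.Quotient.mk_eq_zero N).1 hx⟩, rfl⟩)
      ((ModuleCat.mono_iff_injective _).2 (Submodule.subtype_injective _))
      ((ModuleCat.epi_iff_surjective _).2 (Submodule.mkQ_surjective _))
  exact dist_le k F _ hS.singleTriangle_distinguished i

lemma dF_le (i : ℤ) (M : Type u) [AddCommGroup M] [Module A M] (h : IsFiniteLength A M) :
    dF k F i (ModuleCat.of A M) ≤ Module.length A M * dF k F i (S0 A) := by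
  induction h with
  | @of_subsingleton M _ _ _ =>
    have h0 : IsZero (ModuleCat.of A M) := ModuleCat.isZero_of_subsingleton _
    have h1 := (HH B i).map_isZero (F.map_isZero
      ((DerivedCategory.singleFunctor (ModuleCat.{u} A) 0).map_isZero h0))
    have h2 : dF k F i (ModuleCat.of A M) = 0 := (len_eq_zero k).2 h1
    rw [h2]; exact bot_le
  | @of_simple_quotient M _ _ N _ _ ih =>
    have h1 := Module.length_eq_add_of_exact N.subtype N.mkQ (Submodule.subtype_injective _)
      (Submodule.mkQ_surjective _) (LinearMap.exact_subtype_mkQ N)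
    rw [h1, Module.length_eq_one A (M ⧸ N), add_mul, one_mul]
    exact (dF_ext k F i M N).trans (add_le_add ih (dF_simple k F i _))

/-- shifting -/
lemma dF_shift (i b : ℤ) (M : ModuleCat.{u} A) :
    len k ((HH B i).obj (F.obj ((DerivedCategory.singleFunctor (ModuleCat.{u} A) b).obj M))) =
      dF k F (i - b) M := by
  let e : (shiftFunctor _ (-b)).obj ((DerivedCategory.singleFunctor (ModuleCat.{u} A) 0).obj M) ≅
      (DerivedCategory.singleFunctor (ModuleCat.{u} A) b).obj M :=
    ((DerivedCategory.singleFunctors (ModuleCat.{u} A)).shiftIso (-b) b 0 (by simp)).app M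
  let e' := (HH B i).mapIso (F.mapIso e.symm ≪≫ (F.commShiftIso (-b)).app _) ≪≫ HHshift _ (-b) i
  have := len_iso k e'
  rw [this, dF, neg_add_eq_sub]

end Dev
end SDU

namespace SDU
open Pretriangulated

section Dev3
variable (k : Type u) [Field k]
variable {A : Type u} [Ring A] [Algebra k A] [FiniteDimensional k A]
  [HasDerivedCategory.{u} (ModuleCat.{u} A)]
variable {B : Type u} [Ring B] [Algebra k B] [HasDerivedCategory.{u} (ModuleCat.{u} B)]
variable (F : DerivedCategory (ModuleCat.{u} A) ⥤ DerivedCategory (ModuleCat.{u} B))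
  [F.CommShift ℤ] [F.IsTriangulated]

open ZeroObject in
lemma isZero_of_HH {R : Type u} [Ring R] [HasDerivedCategory.{u} (ModuleCat.{u} R)]
    (X : DerivedCategory (ModuleCat.{u} R)) (h : ∀ i, IsZero ((HH R i).obj X)) : IsZero X := by
  have : IsIso (0 : X ⟶ 0) := by
    rw [DerivedCategory.isIso_iff]
    intro n
    have h2 : IsZero ((HH R n).obj (0 : DerivedCategory (ModuleCat.{u} R))) :=
      (HH R n).map_isZero (isZero_zero _)
    exact ⟨0, (h n).eq_of_src _ _, h2.eq_of_src _ _⟩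
  exact (isZero_zero _).of_iso (asIso (0 : X ⟶ 0))

lemma dev (a : ℤ) (w : ℕ) (i : ℤ) : ∀ (X : DerivedCategory (ModuleCat.{u} A)),
    (∀ j, (j < a ∨ a + w ≤ j) → IsZero ((HH A j).obj X)) →
    (∀ j, len k ((HH A j).obj X) ≠ ⊤) →
    len k ((HH B i).obj (F.obj X)) ≤ ∑ m ∈ Finset.range w,
      len k ((HH A (a + m)).obj X) * dF k F (i - (a + m)) (S0 A) := by
  induction w with
  | zero =>
    intro X hX _
    have h0 : IsZero X := isZero_of_HH X (fun j => hX j (by simp; omega))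
    rw [(len_eq_zero k).2 ((HH B i).map_isZero (F.map_isZero h0))]
    exact bot_le
  | succ w ih =>
    intro X hX hfin
    let t := DerivedCategory.TStructure.t (C := ModuleCat.{u} A)
    let b : ℤ := a + w
    let T := (t.triangleLTGE b).obj X
    have hT : T ∈ distTriang _ := t.triangleLTGE_distinguished b X
    have h2 : T.obj₂ = X := rfl
    have hLE : ∀ j, b ≤ j → IsZero ((HH A j).obj T.obj₁) := by
      have h : T.obj₁.IsLE (b - 1) := inferInstanceAs (t.IsLE ((t.triangleLTGE b).obj X).obj₁ (b-1))
      intro j hj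
      exact (DerivedCategory.isLE_iff _ _).1 h j (by omega)
    have hGE : ∀ j, j < b → IsZero ((HH A j).obj T.obj₃) := by
      have h : T.obj₃.IsGE b := inferInstanceAs (t.IsGE ((t.truncGE b).obj X) b)
      intro j hj
      exact (DerivedCategory.isGE_iff _ _).1 h j (by omega)
    have hl1 : ∀ j, len k ((HH A j).obj T.obj₁) ≤ len k ((HH A j).obj X) := by
      intro j
      by_cases hj : b ≤ j
      · rw [(len_eq_zero k).2 (hLE j hj)]; exact bot_le
      · refine len_mono k ((HH A j).map T.mor₁) ?_
        exact (DerivedCategory.HomologySequence.mono_homologyMap_mor₁_iff T hT (j-1) j (by omega)).2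
          ((hGE (j-1) (by omega)).eq_of_src _ _)
    have hl3 : ∀ j, len k ((HH A j).obj T.obj₃) ≤ len k ((HH A j).obj X) := by
      intro j
      by_cases hj : j < b
      · rw [(len_eq_zero k).2 (hGE j hj)]; exact bot_le
      · refine len_epi k ((HH A j).map T.mor₂) ?_
        exact (DerivedCategory.HomologySequence.epi_homologyMap_mor₂_iff T hT j (j+1) rfl).2
          ((hLE (j+1) (by omega)).eq_of_tgt _ _)
    have hz : ∀ {M N : ModuleCat.{u} A}, len k M ≤ len k N → IsZero N → IsZero M := by
      intro M N h hN
      rw [← len_eq_zero k] at hN ⊢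
      rw [hN] at h
      exact le_antisymm h bot_le
    -- the first term
    have I1 := ih T.obj₁ (fun j hj => by
      rcases hj with hj | hj
      · exact hz (hl1 j) (hX j (Or.inl hj))
      · exact hLE j hj) (fun j => ne_top_of_le_ne_top (hfin j) (hl1 j))
    -- the last term
    have I3 : len k ((HH B i).obj (F.obj T.obj₃)) ≤
        len k ((HH A b).obj X) * dF k F (i - b) (S0 A) := by
      have g1 : T.obj₃.IsGE b := (DerivedCategory.isGE_iff _ _).2 hGE
      have g2 : T.obj₃.IsLE b := (DerivedCategory.isLE_iff _ _).2 (fun j hj =>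
        hz (hl3 j) (hX j (Or.inr (by push_cast; omega))))
      obtain ⟨M, ⟨e⟩⟩ :=
        DerivedCategory.exists_iso_singleFunctor_obj_of_isGE_of_isLE T.obj₃ b
      let e2 : (HH A b).obj T.obj₃ ≅ M := (HH A b).mapIso e ≪≫
        (DerivedCategory.singleFunctorCompHomologyFunctorIso (ModuleCat.{u} A) b).app M
      have hM : len k M ≤ len k ((HH A b).obj X) := by
        rw [← len_iso k e2]; exact hl3 b
      have hML : Module.length A M ≤ len k ((HH A b).obj X) := (length_le_len k M).trans hM
      have hMf : IsFiniteLength A M :=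
        Module.length_ne_top_iff.1 (ne_top_of_le_ne_top (hfin b) hML)
      rw [len_iso k ((HH B i).mapIso (F.mapIso e)), dF_shift]
      exact (dF_le k F (i - b) M hMf).trans (mul_le_mul_left hML _)
    rw [Finset.sum_range_succ]
    refine (dist_le k F T hT i).trans (add_le_add (I1.trans ?_) I3)
    exact Finset.sum_le_sum (fun m _ => mul_le_mul_left (hl1 _) _)

end Dev3
end SDU

namespace SDU
open Pretriangulated

section Num
variable (k : Type u) [Field k] [IsAlgClosed k]
variable {R : Type u} [Ring R] [Algebra k R] [FiniteDimensional k R]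
  [HasDerivedCategory.{u} (ModuleCat.{u} R)]

lemma len_eq_hdim {X : DerivedCategory (ModuleCat.{u} R)} (h : InDb k R X) (i : ℤ) :
    len k ((HH R i).obj X) = (hdim k R i X : ℕ∞) :=
  len_eq_finrank k _ ((len_ne_top_iff k _).2 (h.2 i))

lemma hdim_eq_zero {X : DerivedCategory (ModuleCat.{u} R)} (h : InDb k R X) {i : ℤ} :
    hdim k R i X = 0 ↔ IsZero (Hobj R i X) := by
  rw [← Nat.cast_inj (R := ℕ∞), ← len_eq_hdim k h i, Nat.cast_zero]
  exact len_eq_zero k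

lemma hdim_le_hl {X : DerivedCategory (ModuleCat.{u} R)} (h : InDb k R X) (i : ℤ) :
    hdim k R i X ≤ hl k R X := by
  refine le_csSup ?_ ⟨i, rfl⟩
  obtain ⟨a, b, hab⟩ := h.1
  refine Set.Finite.bddAbove ?_
  refine ((Set.finite_Icc a b).image (fun i => hdim k R i X) |>.insert 0).subset ?_
  rintro _ ⟨j, rfl⟩
  by_cases hj : j < a ∨ b < j
  · exact Or.inl ((hdim_eq_zero k h).2 (hab j hj))
  · push Not at hj
    exact Or.inr ⟨j, ⟨hj.1, hj.2⟩, rfl⟩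

lemma le_hw {X : DerivedCategory (ModuleCat.{u} R)} (h : InDb k R X) {i j : ℤ}
    (hi : ¬ IsZero (Hobj R i X)) (hj : ¬ IsZero (Hobj R j X)) : j - i + 1 ≤ (hw R X : ℤ) := by
  by_cases hn : 0 ≤ j - i + 1
  · obtain ⟨n, hn⟩ := Int.eq_ofNat_of_zero_le hn
    rw [hn]
    refine Nat.cast_le.2 (le_csSup ?_ ⟨i, j, hi, hj, hn.symm⟩)
    obtain ⟨a, b, hab⟩ := h.1
    refine ⟨(b - a + 1).toNat, ?_⟩
    rintro m ⟨i', j', hi', hj', e⟩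
    have h1 : ¬ (i' < a ∨ b < i') := fun h => hi' (hab _ h)
    have h2 : ¬ (j' < a ∨ b < j') := fun h => hj' (hab _ h)
    omega
  · omega

lemma exists_ne {X : DerivedCategory (ModuleCat.{u} R)} (h0 : ¬ IsZero X) :
    ∃ i, ¬ IsZero (Hobj R i X) := by
  by_contra hc
  push Not at hc
  exact h0 (isZero_of_HH X hc)

lemma one_le_hw {X : DerivedCategory (ModuleCat.{u} R)} (h : InDb k R X) (h0 : ¬ IsZero X) :
    1 ≤ hw R X := by
  obtain ⟨i, hi⟩ := exists_ne h0
  have := le_hw k h hi hi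
  omega

lemma one_le_hl {X : DerivedCategory (ModuleCat.{u} R)} (h : InDb k R X) (h0 : ¬ IsZero X) :
    1 ≤ hl k R X := by
  obtain ⟨i, hi⟩ := exists_ne h0
  have h1 := hdim_le_hl k h i
  have h2 : hdim k R i X ≠ 0 := fun h' => hi ((hdim_eq_zero k h).1 h')
  omega

end Num

section Main
variable (k : Type u) [Field k] [IsAlgClosed k]
variable {A : Type u} [Ring A] [Algebra k A] [FiniteDimensional k A]
  [HasDerivedCategory.{u} (ModuleCat.{u} A)]
variable {B : Type u} [Ring B] [Algebra k B] [FiniteDimensional k B]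
  [HasDerivedCategory.{u} (ModuleCat.{u} B)]
variable (F : DerivedCategory (ModuleCat.{u} A) ⥤ DerivedCategory (ModuleCat.{u} B))
  [F.CommShift ℤ] [F.IsTriangulated] [F.IsEquivalence]

lemma dF_finite (M : ModuleCat.{u} A) [Module.Finite A M] :
    (∀ i, dF k F i M ≠ ⊤) ∧ ∃ s : Finset ℤ, ∀ i ∉ s, dF k F i M = 0 := by
  let K : CochainComplex (ModuleCat.{u} A) ℤ := (CochainComplex.singleFunctor _ 0).obj M
  let e : (DerivedCategory.singleFunctor (ModuleCat.{u} A) 0).obj M ≅ DerivedCategory.Q.obj K :=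
    (DerivedCategory.singleFunctorIsoCompQ (ModuleCat.{u} A) 0).app M
  have hne : ∀ n ≠ 0, Subsingleton (K.X n) := fun n hn =>
    ModuleCat.subsingleton_of_isZero (HomologicalComplex.isZero_single_obj_X _ _ _ _ hn)
  have hfin : ∀ n, Module.Finite A (K.X n) := by
    intro n
    by_cases hn : n = 0
    · subst hn
      exact Module.Finite.equiv
        (HomologicalComplex.singleObjXSelf (ComplexShape.up ℤ) 0 M).symm.toLinearEquiv
    · have := hne n hn
      infer_instance
  constructor
  · intro i
    have h := finite_F F k K hfin i
    rw [dF, len_iso k ((HH B i).mapIso (F.mapIso e))]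
    exact len_ne_top_of_finite k _
  · obtain ⟨s, hs⟩ := finite_supp F K hne
    refine ⟨s, fun i hi => ?_⟩
    rw [dF, len_iso k ((HH B i).mapIso (F.mapIso e))]
    exact (len_eq_zero k).2 (hs i hi)

lemma consts : ∃ c G : ℕ, (∀ i, dF k F i (S0 A) ≤ (G : ℕ∞)) ∧
    ∀ i : ℤ, dF k F i (S0 A) ≠ 0 → |i| ≤ c := by
  have : Module.Finite A (S0 A) := inferInstanceAs (Module.Finite A (A ⧸ Ring.jacobson A))
  obtain ⟨h1, s, hs⟩ := dF_finite k F (S0 A)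
  refine ⟨∑ i ∈ s, i.natAbs, ∑ i ∈ s, (dF k F i (S0 A)).toNat, ?_, ?_⟩
  · intro i
    by_cases hi : i ∈ s
    · rw [← ENat.natCast_toNat (h1 i), Nat.cast_le]
      exact Finset.single_le_sum (f := fun i => (dF k F i (S0 A)).toNat)
        (fun _ _ => Nat.zero_le _) hi
    · rw [hs i hi]; exact bot_le
  · intro i hi
    have : i ∈ s := by
      by_contra h; exact hi (hs i h)
    have := Finset.single_le_sum (f := fun i : ℤ => i.natAbs) (fun _ _ => Nat.zero_le _) this
    rw [Int.abs_eq_natAbs]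
    exact_mod_cast this

theorem main_bound : ∃ f : ℕ → ℕ, Monotone f ∧ ∀ X : DerivedCategory (ModuleCat.{u} A),
    InDb k A X → ¬ IsZero X → InDb k B (F.obj X) ∧ hr k B (F.obj X) ≤ f (hr k A X) := by
  obtain ⟨c, G, hG, hc⟩ := consts k F
  refine ⟨fun n => (n + 2 * c) * (n * G), fun m n h => by dsimp only; gcongr, ?_⟩
  intro X hX h0
  -- least nonzero degree
  obtain ⟨a0, b0, hab⟩ := hX.1
  obtain ⟨a, ha, hamin⟩ := Int.exists_least_of_bdd (P := fun j => ¬ IsZero (Hobj A j X))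
    ⟨a0, fun z hz => by by_contra h; exact hz (hab z (Or.inl (by omega)))⟩ (exists_ne h0)
  have key : ∀ i, len k ((HH B i).obj (F.obj X)) ≤ ∑ m ∈ Finset.range (hw A X),
      len k ((HH A (a + m)).obj X) * dF k F (i - (a + m)) (S0 A) := by
    intro i
    refine dev k F a (hw A X) i X ?_ ?_
    · intro j hj
      by_contra hz
      rcases hj with hj | hj
      · have := hamin j hz
        omega
      · have := le_hw k hX ha hz
        omega
    · intro j
      rw [len_eq_hdim k hX]
      exact ENat.natCast_ne_top _
  have bd : ∀ i, len k ((HH B i).obj (F.obj X)) ≤ ((hr k A X * G : ℕ) : ℕ∞) := by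
    intro i
    refine (key i).trans ?_
    refine (Finset.sum_le_sum (g := fun _ => ((hl k A X * G : ℕ) : ℕ∞)) (fun m _ => ?_)).trans ?_
    · rw [len_eq_hdim k hX, Nat.cast_mul]
      exact mul_le_mul' (Nat.cast_le.2 (hdim_le_hl k hX _)) (hG _)
    · rw [Finset.sum_const, Finset.card_range, nsmul_eq_mul, hr, ← Nat.cast_mul, mul_assoc]
  have supp : ∀ i, ¬ IsZero (Hobj B i (F.obj X)) →
      ∃ j, ¬ IsZero (Hobj A j X) ∧ |i - j| ≤ c := by
    intro i hi
    by_contra hcon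
    push Not at hcon
    refine hi ((len_eq_zero k).1 (le_antisymm ((key i).trans ?_) bot_le))
    refine le_of_eq (Finset.sum_eq_zero (fun m _ => ?_))
    by_cases hz : IsZero (Hobj A (a + m) X)
    · have hz' : IsZero ((HH A (a + m)).obj X) := hz
      rw [(len_eq_zero k).2 hz', zero_mul]
    · have h1 := hcon _ hz
      have h2 : dF k F (i - (a + m)) (S0 A) = 0 := by
        by_contra h
        have := hc _ h
        omega
      rw [h2, mul_zero]
  have hDb : InDb k B (F.obj X) := by
    constructor
    · refine ⟨a0 - c, b0 + c, fun i hi => ?_⟩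
      by_contra hz
      obtain ⟨j, hj, hij⟩ := supp i hz
      have : ¬ (j < a0 ∨ b0 < j) := fun h => hj (hab j h)
      rw [abs_le] at hij
      omega
    · intro i
      exact (len_ne_top_iff k _).1 (ne_top_of_le_ne_top (ENat.natCast_ne_top _) (bd i))
  refine ⟨hDb, ?_⟩
  have e1 : hw B (F.obj X) ≤ hw A X + 2 * c := by
    refine csSup_le' ?_
    rintro n ⟨i, j, hi, hj, e⟩
    obtain ⟨i', hi', h1⟩ := supp i hi
    obtain ⟨j', hj', h2⟩ := supp j hj
    have := le_hw k hX hi' hj'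
    rw [abs_le] at h1 h2
    omega
  have e2 : hl k B (F.obj X) ≤ hr k A X * G := by
    refine csSup_le' ?_
    rintro _ ⟨i, rfl⟩
    have := bd i
    rw [len_eq_hdim k hDb] at this
    exact_mod_cast this
  have e3 : hw A X ≤ hr k A X := Nat.le_mul_of_pos_right _ (one_le_hl k hX h0)
  exact Nat.mul_le_mul (e1.trans (by omega)) e2

end Main
end SDU

namespace SDU
open Pretriangulated

section Asm
variable (k : Type u) [Field k] [IsAlgClosed k]
variable {A : Type u} [Ring A] [Algebra k A] [FiniteDimensional k A]
  [HasDerivedCategory.{u} (ModuleCat.{u} A)]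
variable {B : Type u} [Ring B] [Algebra k B] [FiniteDimensional k B]
  [HasDerivedCategory.{u} (ModuleCat.{u} B)]

lemma hr_iso {X Y : DerivedCategory (ModuleCat.{u} A)} (e : X ≅ Y) : hr k A X = hr k A Y := by
  have h1 : ∀ i, IsZero (Hobj A i X) ↔ IsZero (Hobj A i Y) := fun i =>
    ((HH A i).mapIso e).isZero_iff
  have h2 : ∀ i, hdim k A i X = hdim k A i Y := fun i =>
    LinearEquiv.finrank_eq ((ModuleCat.restrictScalars (algebraMap k A)).mapIso
      ((HH A i).mapIso e)).toLinearEquiv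
  simp only [hr, hw, hl, h1, h2]

theorem inv_boundE (E : DerivedCategory (ModuleCat.{u} A) ≌ DerivedCategory (ModuleCat.{u} B))
    [E.functor.CommShift ℤ] [E.functor.IsTriangulated] :
    ∃ f : ℕ → ℕ, Monotone f ∧ ∀ X : DerivedCategory (ModuleCat.{u} A),
    InDb k B (E.functor.obj X) → ¬ IsZero X → hr k A X ≤ f (hr k B (E.functor.obj X)) := by
  let _ : E.inverse.CommShift ℤ := E.commShiftInverse ℤ
  have : E.CommShift ℤ := E.commShift_of_functor ℤ
  have : E.inverse.IsTriangulated := E.toAdjunction.isTriangulated_rightAdjoint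
  obtain ⟨f, hf, h⟩ := main_bound k E.inverse
  refine ⟨f, hf, fun X hX h0 => ?_⟩
  have h1 : ¬ IsZero (E.functor.obj X) := fun hz => h0 ((E.inverse.map_isZero hz).of_iso
    (E.unitIso.app X))
  exact (hr_iso k (E.unitIso.app X)).le.trans (h _ hX h1).2

variable (F : DerivedCategory (ModuleCat.{u} A) ⥤ DerivedCategory (ModuleCat.{u} B))
  [hF1 : F.CommShift ℤ] [hF2 : F.IsTriangulated] [F.IsEquivalence]

theorem inv_bound : ∃ f : ℕ → ℕ, Monotone f ∧ ∀ X : DerivedCategory (ModuleCat.{u} A),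
    InDb k B (F.obj X) → ¬ IsZero X → hr k A X ≤ f (hr k B (F.obj X)) :=
  @inv_boundE k _ _ A _ _ _ _ B _ _ _ _ F.asEquivalence hF1 hF2

lemma indec_F {X : DerivedCategory (ModuleCat.{u} A)} (h : Indec X) : Indec (F.obj X) := by
  refine ⟨fun hz => h.1 ((F.asEquivalence.inverse.map_isZero hz).of_iso
    (F.asEquivalence.unitIso.app X)), fun e he => ?_⟩
  obtain ⟨g, rfl⟩ := F.map_surjective e
  have hg : g ≫ g = g := F.map_injective (by rw [F.map_comp, he])
  rcases h.2 g hg with rfl | rfl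
  · left; simp
  · right; simp

theorem assemble
    (F : DerivedCategory (ModuleCat.{u} A) ⥤ DerivedCategory (ModuleCat.{u} B))
    [F.CommShift ℤ] [F.IsTriangulated] [F.IsEquivalence] (hA : StronglyDerivedUnbounded k A) : StronglyDerivedUnbounded k B := by
  obtain ⟨r, hr0, hX⟩ := hA
  obtain ⟨f, -, hf⟩ := main_bound k F
  obtain ⟨g, hgm, hg⟩ := inv_bound k F
  let P : ℕ → Prop := fun s => ∃ Y : ℕ → DerivedCategory (ModuleCat.{u} B),
    (∀ j : ℕ, Indec (Y j) ∧ InDb k B (Y j) ∧ hr k B (Y j) = s) ∧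
    (∀ j j' : ℕ, j ≠ j' → ∀ n : ℤ, IsEmpty (Y j ≅ (Y j')⟦n⟧))
  have key : ∀ i, ∃ s, P s ∧ r i ≤ g s := by
    intro i
    obtain ⟨X, h1, h2⟩ := hX i
    have hb : ∀ j, hr k B (F.obj (X j)) < f (r i) + 1 := fun j => by
      have := (hf (X j) (h1 j).2.1 (h1 j).1.1).2
      rw [(h1 j).2.2] at this
      omega
    obtain ⟨s, hs⟩ := Finite.exists_infinite_fiber
      (fun j : ℕ => (⟨hr k B (F.obj (X j)), hb j⟩ : Fin (f (r i) + 1)))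
    rw [Set.infinite_coe_iff] at hs
    let ψ := hs.natEmbedding _
    obtain ⟨φ, hinj, hφ⟩ : ∃ φ : ℕ → ℕ, Function.Injective φ ∧
        ∀ j, hr k B (F.obj (X (φ j))) = s :=
      ⟨fun j => (ψ j).1, fun a b h => ψ.injective (Subtype.ext h),
        fun j => congrArg Fin.val (ψ j).2⟩
    refine ⟨s, ⟨fun j => F.obj (X (φ j)), fun j => ⟨indec_F F (h1 _).1,
      (hf _ (h1 _).2.1 (h1 _).1.1).1, hφ j⟩, ?_⟩, ?_⟩
    · intro j j' hj n
      refine ⟨fun e => (h2 _ _ (fun h => hj (hinj h)) n).false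
        (F.preimageIso (e ≪≫ ((F.commShiftIso n).app _).symm))⟩
    · have := hg (X (φ 0)) (hf _ (h1 _).2.1 (h1 _).1.1).1 (h1 _).1.1
      rwa [hφ, (h1 _).2.2] at this
  have hinf : ({s | P s} : Set ℕ).Infinite := by
    intro hfin
    obtain ⟨N, hN⟩ := hfin.bddAbove
    obtain ⟨s, hs, h⟩ := key (g N + 1)
    have h3 : g s ≤ g N := hgm (hN hs)
    have := hr0.id_le (g N + 1)
    simp only [id] at this
    omega
  refine ⟨Nat.nth P, Nat.nth_strictMono hinf, fun i => Nat.nth_mem_of_infinite hinf i⟩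

end Asm
end SDU

theorem stronglyDerivedUnbounded_of_derived_equivalence
    (A : Type u) [Ring A] [Algebra k A] [FiniteDimensional k A]
    [HasDerivedCategory.{u} (ModuleCat.{u} A)]
    (B : Type u) [Ring B] [Algebra k B] [FiniteDimensional k B]
    [HasDerivedCategory.{u} (ModuleCat.{u} B)]
    (F : DerivedCategory (ModuleCat.{u} A) ⥤ DerivedCategory (ModuleCat.{u} B))
    [F.CommShift ℤ] [F.IsTriangulated] [F.IsEquivalence]
    (hA : StronglyDerivedUnbounded k A) :
    StronglyDerivedUnbounded k B := by
  exact SDU.assemble k F hA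
end

section
/- Let A be a finite-dimensional algebra that is representation-finite (e.g., because it is not strongly derived unbounded). Then for every primitive idempotent e of A, the local algebra eAe is uniserial, hence isomorphic to k[x]/(x^m) for some m ≥ 1; and if additionally A embeds the truncated path algebra situation via the cleaving functor A_n^m → A (sending each vertex to the object a and each arrow to x), then m ≤ 2, i.e., eAe ≅ k or eAe ≅ k[x]/(x²). -/
/-!
STATEMENT 19: Let `A` be a representation-finite finite-dimensional algebra over an
algebraically closed field (e.g. because it is not strongly derived unbounded).  Then
for every primitive idempotent `e` of `A` the local algebra `eAe` is uniserial, hence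
isomorphic to `k[x]/(x^m)` for some `m ≥ 1` (expressed by: there is `x = e*x*e` with
`x^m = 0` such that `e, x, …, x^{m-1}` is a `k`-basis of `eAe`); and if moreover `A` is
not strongly derived unbounded (via the cleaving functors `A_n^m → A`), then `m ≤ 2`,
i.e. `eAe ≅ k` or `eAe ≅ k[x]/(x²)`.
-/

open CategoryTheory Limits

universe u
variable (k : Type u) [Field k] [IsAlgClosed k]

section

variable (A : Type u) [Ring A] [Algebra k A] [FiniteDimensional k A]
  [HasDerivedCategory.{u} (ModuleCat.{u} A)]

/-- A primitive idempotent. -/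
def IsPrimitiveIdem (a : A) : Prop :=
  a * a = a ∧ a ≠ 0 ∧
  ∀ f g : A, f * f = f → g * g = g → f * g = 0 → g * f = 0 → f + g = a →
    f = 0 ∨ g = 0

/-- `A` is representation-finite: there are only finitely many finite-dimensional
indecomposable `A`-modules up to isomorphism. -/
def IsRepFinite : Prop :=
  ∃ (ι : Type u) (_ : Finite ι) (rep : ι → ModuleCat.{u} A),
    ∀ M : ModuleCat.{u} A,
      FiniteDimensional k ((ModuleCat.restrictScalars (algebraMap k A)).obj M) →
      Indec M → ∃ i : ι, Nonempty (M ≅ rep i)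

set_option linter.unusedSectionVars false
set_option linter.unusedSimpArgs false

namespace CornerAux
section
open Polynomial

section local_part
variable {k A : Type*} [Field k] [Ring A] [Algebra k A]

/-- Nilpotent or invertible in the corner. -/
theorem nil_or_inv [FiniteDimensional k A] {e : A} (he : e * e = e)
    (hp : ∀ f g : A, f * f = f → g * g = g → f * g = 0 → g * f = 0 → f + g = e → f = 0 ∨ g = 0)
    (y : A) (hy : e * y * e = y) :
    IsNilpotent y ∨ ∃ z : A, z * y = e := by
  have hey : e * y = y := by rw [← hy]; simp only [← mul_assoc, he]
  have hye : y * e = y := by rw [← hy]; simp only [mul_assoc, he]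
  have hcomm : Commute e y := by rw [Commute, SemiconjBy, hey, hye]
  have hc (p : k[X]) : Commute e (aeval y p) := by
    induction p using Polynomial.induction_on' with
    | add p q hp hq => rw [map_add]; exact hp.add_right hq
    | monomial n a =>
      rw [aeval_monomial]
      exact (Algebra.commute_algebraMap_right a e).mul_right (hcomm.pow_right n)
  have hint : IsIntegral k y := Algebra.IsIntegral.isIntegral y
  have hp0 : minpoly k y ≠ 0 := minpoly.ne_zero hint
  obtain ⟨q, hq, hnd⟩ := Polynomial.exists_eq_pow_rootMultiplicity_mul_and_not_dvd
    (minpoly k y) hp0 0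
  set r := (minpoly k y).rootMultiplicity 0
  rw [C_0, sub_zero] at hq hnd
  have hcop : IsCoprime ((X : k[X]) ^ r) q := by
    apply IsCoprime.pow_left
    exact (Irreducible.coprime_iff_not_dvd irreducible_X).2 hnd
  obtain ⟨a, b, hab⟩ := hcop
  have h0 : aeval y (X ^ r * q) = 0 := by rw [← hq]; exact minpoly.aeval k y
  set f := aeval y (a * X ^ r) with hf
  set g := aeval y (b * q) with hg
  have hfg1 : f + g = 1 := by rw [hf, hg, ← map_add, hab, map_one]
  have hfg0 : f * g = 0 := by
    rw [hf, hg, ← map_mul, show a * X ^ r * (b * q) = a * b * (X ^ r * q) by ring, map_mul, h0,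
      mul_zero]
  have hgf0 : g * f = 0 := by
    rw [hf, hg, ← map_mul, show (b * q) * (a * X ^ r) = a * b * (X ^ r * q) by ring, map_mul, h0,
      mul_zero]
  have hff : f * f = f := by
    have := congrArg (f * ·) hfg1
    simpa [mul_add, hfg0] using this
  have hgg : g * g = g := by
    have := congrArg (g * ·) hfg1
    simpa [mul_add, hgf0] using this
  have cf : Commute e f := hc _
  have cg : Commute e g := hc _
  have key (s t : A) (cs : Commute e s) : (e * s) * (e * t) = e * (s * t) := by
    rw [mul_assoc, ← mul_assoc s, ← cs.eq, ← mul_assoc, ← mul_assoc, he, mul_assoc]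
  rcases hp (e * f) (e * g) (by rw [key _ _ cf, hff]) (by rw [key _ _ cg, hgg])
    (by rw [key _ _ cf, hfg0, mul_zero]) (by rw [key _ _ cg, hgf0, mul_zero])
    (by rw [← mul_add, hfg1, mul_one]) with h | h
  · left
    refine ⟨r + 1, ?_⟩
    have h1 : y ^ r * g = 0 := by
      have : y ^ r * g = aeval y (X ^ r * (b * q)) := by rw [map_mul, ← hg]; simp
      rw [this, show X ^ r * (b * q) = b * (X ^ r * q) by ring, map_mul, h0, mul_zero]
    have h2 : y * f = 0 := by rw [← hye, mul_assoc, h, mul_zero]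
    have h3 : y ^ (r + 1) * f = 0 := by rw [pow_succ, mul_assoc, h2, mul_zero]
    calc y ^ (r+1) = y ^ (r+1) * (f + g) := by rw [hfg1, mul_one]
      _ = 0 := by rw [mul_add, h3, pow_succ', mul_assoc, h1]; simp
  · right
    rcases Nat.eq_zero_or_pos r with h0' | hr
    · have hu : ∃ z, z * y = 1 := by
        have hq0 : q.coeff 0 ≠ 0 := by
          intro h; exact hnd (X_dvd_iff.2 h)
        have hyq : aeval y q = 0 := by simpa [h0'] using h0
        rw [← divX_mul_X_add q, map_add, map_mul, aeval_X, aeval_C] at hyq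
        refine ⟨-(algebraMap k A (q.coeff 0)⁻¹) * aeval y q.divX, ?_⟩
        have : aeval y q.divX * y = - algebraMap k A (q.coeff 0) := eq_neg_of_add_eq_zero_left hyq
        rw [mul_assoc, this, neg_mul_neg, ← map_mul, inv_mul_cancel₀ hq0, map_one]
      obtain ⟨z, hz⟩ := hu
      exact ⟨e * z, by rw [mul_assoc, hz, mul_one]⟩
    · refine ⟨e * aeval y (a * X ^ (r - 1)), ?_⟩
      have : aeval y (a * X ^ (r - 1)) * y = f := by
        rw [hf, ← Nat.sub_add_cancel hr, pow_succ, ← mul_assoc, map_mul _ _ X, aeval_X]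
        simp
      rw [mul_assoc, this]
      have := congrArg (e * ·) hfg1
      simpa [mul_add, h] using this

theorem not_nil_of_inv {e : A} (he0 : e ≠ 0) (he : e * e = e) {y z : A} (hy : e * y * e = y)
    (h : z * y = e) : ¬ IsNilpotent y := by
  rintro ⟨n, hn⟩
  have hey : e * y = y := by rw [← hy]; simp only [← mul_assoc, he]
  have : ∀ n, z ^ n * y ^ n * e = e := by
    intro n
    induction n with
    | zero => simp
    | succ n ih =>
      rw [pow_succ, pow_succ', mul_assoc (z ^ n), ← mul_assoc z, h]
      cases n with
      | zero => simp [he]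
      | succ n => rw [pow_succ' y n, ← mul_assoc e, hey, ← pow_succ' y n, ih]
  have := this n
  rw [hn] at this
  simp at this
  exact he0 this.symm

theorem exists_scalar [IsAlgClosed k] [FiniteDimensional k A] {e : A} (he : e * e = e)
    (he0 : e ≠ 0)
    (hp : ∀ f g : A, f * f = f → g * g = g → f * g = 0 → g * f = 0 → f + g = e → f = 0 ∨ g = 0)
    (y : A) (hy : e * y * e = y) :
    ∃ c : k, IsNilpotent (y - c • e) := by
  have hey : e * y = y := by rw [← hy]; simp only [← mul_assoc, he]
  have hye : y * e = y := by rw [← hy]; simp only [mul_assoc, he]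
  let V : Submodule k A := LinearMap.range (LinearMap.mulLeft k e)
  have hV (v : A) (hv : v ∈ V) : e * v = v := by
    obtain ⟨w, rfl⟩ := hv
    simp [← mul_assoc, he]
  have hVe : e ∈ V := ⟨e, by simp [he]⟩
  have : Nontrivial V := ⟨⟨⟨e, hVe⟩, 0, fun h => he0 (by simpa using congrArg Subtype.val h)⟩⟩
  let T : V →ₗ[k] V := (LinearMap.mulLeft k y).restrict (p := V) (q := V)
    (fun v hv => ⟨y * v, by simp [← mul_assoc, hey]⟩)
  obtain ⟨c, hc⟩ := Module.End.exists_eigenvalue T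
  obtain ⟨v, hv⟩ := hc.exists_hasEigenvector
  refine ⟨c, ?_⟩
  have hv1 : y * v.1 = c • v.1 := congrArg Subtype.val hv.apply_eq_smul
  rcases nil_or_inv (k := k) he hp (y - c • e) (by
    simp [mul_sub, sub_mul, hey, hye, he]) with h | ⟨z, hz⟩
  · exact h
  · exfalso
    apply hv.2
    apply Subtype.ext
    have : z * (y - c • e) * v.1 = 0 := by
      rw [mul_assoc, sub_mul, hv1, smul_mul_assoc, hV _ v.2, sub_self, mul_zero]
    rw [hz, hV _ v.2] at this
    exact this

/-- corner nilpotents are in the Jacobson radical -/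
theorem nil_mem_jacobson [FiniteDimensional k A] {e : A} (he : e * e = e)
    (he0 : e ≠ 0)
    (hp : ∀ f g : A, f * f = f → g * g = g → f * g = 0 → g * f = 0 → f + g = e → f = 0 ∨ g = 0)
    (y : A) (hy : e * y * e = y) (hn : IsNilpotent y) : y ∈ Ideal.jacobson (⊥ : Ideal A) := by
  have hey : e * y = y := by rw [← hy]; simp only [← mul_assoc, he]
  have hye : y * e = y := by rw [← hy]; simp only [mul_assoc, he]
  rw [Ideal.mem_jacobson_iff]
  intro a
  have h1 : IsNilpotent (e * a * y) := by
    rcases nil_or_inv (k := k) he hp (e * a * y) (by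
      simp only [← mul_assoc, he]; rw [mul_assoc, hye]) with h | ⟨z, hz⟩
    · exact h
    · exact absurd hn (not_nil_of_inv he0 he hy (z := z * (e * a)) (by rw [mul_assoc, hz]))
  have h2 : IsNilpotent (a * y) := by
    obtain ⟨n, hn⟩ := h1
    refine ⟨n + 1, ?_⟩
    have : ∀ n, e * (a * y) ^ n = (e * a * y) ^ n * e := by
      intro n
      induction n with
      | zero => simp
      | succ n ih =>
        rw [pow_succ, ← mul_assoc, ih, pow_succ, mul_assoc, mul_assoc, mul_assoc,  mul_assoc,
          mul_assoc, hye]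
    rw [pow_succ', mul_assoc]
    nth_rewrite 1 [← hye]
    rw [mul_assoc y, this, hn]
    simp
  obtain ⟨u, hu⟩ := h2.isUnit_add_one
  refine ⟨↑u⁻¹, ?_⟩
  have : (↑u⁻¹ : A) * (a * y + 1) = 1 := by rw [← hu]; simp
  rw [mul_add, mul_one, ← mul_assoc] at this
  rw [this, sub_self]; exact Submodule.zero_mem _

theorem jac_pow [FiniteDimensional k A] :
    ∃ r : ℕ, ∀ N : Submodule k A, (∀ y ∈ N, y ∈ Ideal.jacobson (⊥ : Ideal A)) → N ^ r = ⊥ := by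
  have : IsArtinianRing A := IsArtinianRing.of_finite k A
  obtain ⟨r, hr⟩ := IsArtinianRing.isNilpotent_jacobson_bot (R := A)
  refine ⟨r + 1, fun N hN => ?_⟩
  have : ∀ r, ∀ y ∈ N ^ (r + 1), y ∈ (Ideal.jacobson (⊥ : Ideal A)) ^ (r + 1) := by
    intro r
    induction r with
    | zero => intro y hy; rw [zero_add, pow_one] at hy; rw [zero_add, Submodule.pow_one]; exact hN y hy
    | succ r ih =>
      intro y hy
      rw [pow_succ] at hy
      rw [Submodule.pow_succ]
      refine Submodule.mul_induction_on hy (fun a ha b hb => ?_) (fun a b ha hb => add_mem ha hb)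
      exact Ideal.mul_mem_mul (ih a ha) (hN b hb)
  rw [eq_bot_iff]
  intro y hy
  have h1 := this r y hy
  rw [Submodule.pow_succ, hr] at h1
  simpa using h1

end local_part
/-- The span of positive powers absorbs. -/
theorem gen_of_gen_mod_sq {k A : Type*} [Field k] [Ring A] [Algebra k A]
    (N : Submodule k A) (r : ℕ) (hr : N ^ r = ⊥) (x : A) (hx : x ∈ N)
    (h : N ≤ Submodule.span k {x} ⊔ N * N)
    (hNN : N * N ≤ N) :
    N ≤ Submodule.span k (Set.range fun i : ℕ => x ^ (i + 1)) := by
  set P := Submodule.span k (Set.range fun i : ℕ => x ^ (i + 1)) with hP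
  have hxP : Submodule.span k {x} ≤ P := by
    rw [Submodule.span_le]
    rintro _ rfl
    exact Submodule.subset_span ⟨0, by simp⟩
  have hPP : P * P ≤ P := by
    rw [hP, Submodule.span_mul_span, Submodule.span_le]
    rintro _ ⟨_, ⟨i, rfl⟩, _, ⟨j, rfl⟩, rfl⟩
    refine Submodule.subset_span ⟨i + j + 1, ?_⟩
    simp only [← pow_add]
    congr 1; omega
  have hPN : P ≤ N := by
    rw [hP, Submodule.span_le]
    rintro _ ⟨i, rfl⟩
    induction i with
    | zero => simpa using hx
    | succ i ih =>
      have := hNN (Submodule.mul_mem_mul ih hx)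
      simpa [pow_succ] using this
  have key : ∀ s, N ≤ P ⊔ N ^ (s + 1) := by
    intro s
    induction s with
    | zero => rw [zero_add, pow_one]; exact le_sup_right
    | succ s ih =>
      have h2 : N * N ≤ P ⊔ N ^ (s + 2) := by
        calc N * N ≤ (P ⊔ N ^ (s + 1)) * N := mul_le_mul' ih le_rfl
          _ = P * N ⊔ N ^ (s + 1) * N := Submodule.sup_mul _ _ _
          _ ≤ P * (P ⊔ N ^ (s + 1)) ⊔ N ^ (s + 2) := by
              refine sup_le_sup (mul_le_mul' le_rfl ih) ?_
              rw [← pow_succ]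
          _ = (P * P ⊔ P * N ^ (s + 1)) ⊔ N ^ (s + 2) := by rw [Submodule.mul_sup]
          _ ≤ (P ⊔ N ^ (s + 2)) ⊔ N ^ (s + 2) := by
              refine sup_le_sup (sup_le_sup hPP ?_) le_rfl
              rw [pow_succ' N (s + 1)]
              exact mul_le_mul' hPN le_rfl
          _ = P ⊔ N ^ (s + 2) := by rw [sup_assoc, sup_idem]
      exact h.trans (sup_le (hxP.trans le_sup_left) h2)
  have h3 : N ^ (r + 1) = ⊥ := by rw [pow_succ, hr, Submodule.bot_mul]
  have := key r
  rwa [h3, sup_bot_eq] at this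

theorem pow_indep {k A : Type*} [Field k] [Ring A] [Algebra k A] (e x : A) (m : ℕ)
    (hm : 1 ≤ m) (hxm : x ^ m = 0) (hne : e * x ^ (m - 1) ≠ 0) :
    LinearIndependent k (fun i : Fin m => e * x ^ (i : ℕ)) := by
  rw [Fintype.linearIndependent_iff]
  intro g hg
  have : ∀ n : ℕ, ∀ i : Fin m, (i : ℕ) = n → g i = 0 := by
    intro n
    induction n using Nat.strong_induction_on with
    | _ n ih =>
      intro i hi
      have h1 := congrArg (· * x ^ (m - 1 - n)) hg
      simp only [zero_mul, Finset.sum_mul] at h1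
      rw [Finset.sum_eq_single i] at h1
      · rw [smul_mul_assoc, mul_assoc, ← pow_add, hi,
          show n + (m - 1 - n) = m - 1 by have := i.2; omega] at h1
        exact (smul_eq_zero.1 h1).resolve_right hne
      · intro j _ hji
        rcases lt_trichotomy (j : ℕ) n with h | h | h
        · rw [ih j h j rfl]; simp
        · exact absurd (Fin.ext (h.trans hi.symm)) hji
        · rw [smul_mul_assoc, mul_assoc, ← pow_add]
          have : x ^ ((j : ℕ) + (m - 1 - n)) = 0 := pow_eq_zero_of_le (by omega) hxm
          rw [this]; simp
      · simp
  exact fun i => this i i rfl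

end
end CornerAux

namespace CornerAux
section
/-! ### The combinatorial family -/

/-- Generators of the complexes: nine core generators and a tail. -/
abbrev Idx (N : ℕ) := Fin 9 ⊕ Fin (N + 1)

/-- Cohomological degree of a generator. -/
def dg (N : ℕ) : Idx N → ℤ
  | Sum.inl a => (![-1, 0, 0, 1, 1, 2, 2, 3, 3] : Fin 9 → ℤ) a
  | Sum.inr j => 4 + (j : ℤ)

/-- Coefficients of `x` in the differential. -/
def mD1 (k : Type*) [Field k] (N : ℕ) : Matrix (Idx N) (Idx N) k
  | Sum.inl a, Sum.inl b => if (a = 0 ∧ b = 1) ∨ (a = 2 ∧ b = 4) ∨ (a = 6 ∧ b = 7) then 1 else 0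
  | Sum.inl a, Sum.inr j => if j = 0 then (if a = 8 then 1 else 0) else 0
  | Sum.inr _, _ => 0

/-- Coefficients of `x ^ (m - 1)` in the differential. -/
def mD2 {k : Type*} [Field k] (N : ℕ) (t : k) : Matrix (Idx N) (Idx N) k
  | Sum.inl a, Sum.inl b =>
      if a = 3 ∧ b = 5 then t else
      if (a = 1 ∧ b = 3) ∨ (a = 3 ∧ b = 6) ∨ (a = 4 ∧ b = 5) ∨ (a = 4 ∧ b = 6) ∨ (a = 5 ∧ b = 8)
      then 1 else 0
  | Sum.inr i, Sum.inr j => if (j : ℕ) = i + 1 then 1 else 0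
  | _, _ => 0

theorem mD1_deg {k : Type*} [Field k] (N : ℕ) (g h : Idx N) (hd : dg N h ≠ dg N g + 1) :
    mD1 k N g h = 0 := by
  rcases g with a | i <;> rcases h with b | j
  · fin_cases a <;> fin_cases b <;> simp_all [mD1, dg]
  · simp only [mD1]
    split_ifs with h1 h2
    · subst h1; subst h2; simp [dg] at hd
    · rfl
    · rfl
  · rfl
  · rfl

theorem mD2_deg {k : Type*} [Field k] (N : ℕ) (t : k) (g h : Idx N) (hd : dg N h ≠ dg N g + 1) :
    mD2 N t g h = 0 := by
  rcases g with a | i <;> rcases h with b | j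
  · fin_cases a <;> fin_cases b <;> simp_all [mD2, dg]
  · rfl
  · rfl
  · simp only [mD2]
    split_ifs with h1
    · exfalso; apply hd; simp only [dg]; rw [h1]; push_cast; ring
    · rfl

theorem mD1_sq {k : Type*} [Field k] (N : ℕ) : mD1 k N * mD1 k N = 0 := by
  ext g h
  rw [Matrix.mul_apply]
  rcases g with a | i <;> rcases h with b | j
  · fin_cases a <;> fin_cases b <;> simp [mD1, Fintype.sum_sum_type, Fin.sum_univ_succ]
  · fin_cases a <;> simp [mD1, Fintype.sum_sum_type, Fin.sum_univ_succ]
  · simp [mD1]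
  · simp [mD1]

set_option maxHeartbeats 4000000 in
theorem family_hom {k : Type*} [Field k] (N : ℕ) (s t : k) (F S : Matrix (Idx N) (Idx N) k)
    (hF : ∀ g h, dg N g ≠ dg N h → F g h = 0) (hS : ∀ g h, dg N g ≠ dg N h → S g h = 0)
    (h1 : mD1 k N * F = F * mD1 k N)
    (h2 : mD2 N s * F + mD1 k N * S = F * mD2 N t + S * mD1 k N) :
    ∃ c δ ε : k, c * (s - t) = 0 ∧
      F = c • (1 : Matrix (Idx N) (Idx N) k) +
        (δ • Matrix.single (Sum.inl 2) (Sum.inl 1) 1 +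
         ε • Matrix.single (Sum.inl 8) (Sum.inl 7) 1) := by
  have e1 (g h) := congrFun (congrFun h1 g) h
  have e2 (g h) := congrFun (congrFun h2 g) h
  simp only [Matrix.mul_apply, Matrix.add_apply] at e1 e2
  have hF' (a : Fin 9) (j : Fin (N+1)) : F (Sum.inl a) (Sum.inr j) = 0 := by
    apply hF; fin_cases a <;> simp [dg] <;> omega
  have hF'' (a : Fin 9) (j : Fin (N+1)) : F (Sum.inr j) (Sum.inl a) = 0 := by
    apply hF; fin_cases a <;> simp [dg] <;> omega
  have hS' (a : Fin 9) (j : Fin (N+1)) : S (Sum.inl a) (Sum.inr j) = 0 := by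
    apply hS; fin_cases a <;> simp [dg] <;> omega
  have hS'' (a : Fin 9) (j : Fin (N+1)) : S (Sum.inr j) (Sum.inl a) = 0 := by
    apply hS; fin_cases a <;> simp [dg] <;> omega
  have a01 := e1 (Sum.inl 0) (Sum.inl 1)
  have a02 := e1 (Sum.inl 0) (Sum.inl 2)
  have a24 := e1 (Sum.inl 2) (Sum.inl 4)
  have a23 := e1 (Sum.inl 2) (Sum.inl 3)
  have a67 := e1 (Sum.inl 6) (Sum.inl 7)
  have a68 := e1 (Sum.inl 6) (Sum.inl 8)
  have a57 := e1 (Sum.inl 5) (Sum.inl 7)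
  have a8t := e1 (Sum.inl 8) (Sum.inr 0)
  have b13 := e2 (Sum.inl 1) (Sum.inl 3)
  have b14 := e2 (Sum.inl 1) (Sum.inl 4)
  have b02 := e2 (Sum.inl 0) (Sum.inl 2)
  have b35 := e2 (Sum.inl 3) (Sum.inl 5)
  have b36 := e2 (Sum.inl 3) (Sum.inl 6)
  have b45 := e2 (Sum.inl 4) (Sum.inl 5)
  have b46 := e2 (Sum.inl 4) (Sum.inl 6)
  have b58 := e2 (Sum.inl 5) (Sum.inl 8)
  have b68 := e2 (Sum.inl 6) (Sum.inl 8)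
  have b7t := e2 (Sum.inl 7) (Sum.inr 0)
  simp [mD1, mD2, hF', hF'', hS', hS'', Fintype.sum_sum_type, Fin.sum_univ_succ] at a01 a02 a24 a23 a67 a68 a57 a8t b13 b14 b02 b35 b36 b45 b46 b58 b68 b7t
  have tl (i : ℕ) (hi : i < N + 1) : F (Sum.inr ⟨i, hi⟩) (Sum.inr ⟨i, hi⟩) =
      F (Sum.inr 0) (Sum.inr 0) := by
    induction i with
    | zero => rfl
    | succ i ih =>
      rw [← ih (by omega)]
      have q := e2 (Sum.inr ⟨i, by omega⟩) (Sum.inr ⟨i + 1, hi⟩)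
      simp only [Fintype.sum_sum_type, mD1, hF', hF'', hS', hS'', zero_mul, mul_zero,
        Finset.sum_const_zero, zero_add, add_zero, mD2] at q
      rw [Finset.sum_eq_single ⟨i + 1, hi⟩, Finset.sum_eq_single ⟨i, by omega⟩] at q
      · simpa using q
      · intro b _ hb
        rw [if_neg, mul_zero]
        intro h
        apply hb
        ext
        simp at h
        simp [h]
      · simp
      · intro b _ hb
        rw [if_neg, zero_mul]
        intro h
        apply hb
        ext
        simp [h]
      · simp
  refine ⟨F (Sum.inl 3) (Sum.inl 3), F (Sum.inl 2) (Sum.inl 1), F (Sum.inl 8) (Sum.inl 7), ?_, ?_⟩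
  · grind
  · ext g h
    rcases g with a | i <;> rcases h with b | j
    · by_cases hd : dg N (Sum.inl a) = dg N (Sum.inl b)
      · fin_cases a <;> fin_cases b <;> simp [dg] at hd <;> simp [Matrix.single, Matrix.one_apply] <;> grind
      · rw [hF _ _ hd]
        fin_cases a <;> fin_cases b <;> simp [dg] at hd <;> simp [Matrix.single, Matrix.one_apply]
    · rw [hF']; simp [Matrix.single, Matrix.one_apply]
    · rw [hF'']; simp [Matrix.single, Matrix.one_apply]
    · by_cases hij : i = j
      · subst hij
        simp [Matrix.single]
        obtain ⟨i, hi⟩ := i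
        rw [tl]; grind
      · rw [hF]
        · simp [Matrix.single, Matrix.one_apply, hij]
        · simp only [dg]; intro h; apply hij; ext; omega
end
end CornerAux

namespace CornerAux
section
section coef
variable {k A : Type*} [Field k] [Ring A] [Algebra k A]

/-- Coefficient functionals for the corner algebra `eAe` with basis `e x ^ i`. -/
theorem exists_coef {e x : A} {m : ℕ} (he : e * e = e) (hx : e * x * e = x) (hxm : x ^ m = 0)
    (hli : LinearIndependent k (fun i : Fin m => e * x ^ (i : ℕ)))
    (hsp : ∀ y, e * y * e ∈ Submodule.span k (Set.range fun i : Fin m => e * x ^ (i : ℕ)))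
    (hm : 3 ≤ m) :
    (∀ y, e * y * e = y → x * y = y * x) ∧
    ∃ p q u w : A →ₗ[k] k,
      (∀ y, e * y * e = y → u (x * y) = p y ∧ u (x ^ (m - 1) * y) = 0 ∧
        w (x * y) = q y ∧ w (x ^ (m - 1) * y) = p y) ∧
      (∀ y z, e * y * e = y → e * z * e = z → p (y * z) = p y * p z) ∧
      p e = 1 ∧
      (∀ y, e * y * e = y → p y = 0 → ∃ b, e * b * e = b ∧ y = b * x) := by
  have hex : e * x = x := by rw [← hx]; simp only [← mul_assoc, he]
  have hxe : x * e = x := by rw [← hx]; simp only [mul_assoc, he]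
  have hexp (i : ℕ) : e * x ^ i * e = e * x ^ i := by
    cases i with
    | zero => simp [he]
    | succ i => rw [pow_succ, mul_assoc, mul_assoc, hxe]
  have hexx (i j : ℕ) : e * x ^ i * x ^ j = e * x ^ (i + j) := by rw [mul_assoc, pow_add]
  let E : A →ₗ[k] A := (LinearMap.mulLeft k e).comp (LinearMap.mulRight k e)
  have hE (y) : E y = e * y * e := by simp [E, mul_assoc]
  let E' : A →ₗ[k] Submodule.span k (Set.range fun i : Fin m => e * x ^ (i : ℕ)) :=
    E.codRestrict _ (fun y => by rw [hE]; exact hsp y)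
  let κ : ℕ → A →ₗ[k] k := fun j => if h : j < m then
      (Finsupp.lapply (⟨j, h⟩ : Fin m)) ∘ₗ (hli.repr : _ →ₗ[k] (Fin m →₀ k)) ∘ₗ E' else 0
  have exp1 (y) (hy : e * y * e = y) : y = ∑ i ∈ Finset.range m, κ i y • (e * x ^ i) := by
    have h1 := hli.linearCombination_repr (E' y)
    rw [Finsupp.linearCombination_apply, Finsupp.sum_fintype _ _ (by simp)] at h1
    have h2 : ((E' y : _) : A) = y := by simp [E', hE, hy]
    rw [h2] at h1
    rw [Finset.sum_range]
    conv_lhs => rw [← h1]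
    refine Finset.sum_congr rfl fun i _ => ?_
    simp [κ]
  have kap (i j : ℕ) (hj : j < m) : κ j (e * x ^ i) = if i = j then 1 else 0 := by
    by_cases hi : i < m
    · have h1 : E' (e * x ^ i) = ⟨e * x ^ ((⟨i, hi⟩ : Fin m) : ℕ), Submodule.subset_span ⟨_, rfl⟩⟩ := by
        apply Subtype.ext
        simp only [E', LinearMap.codRestrict_apply, hE]
        rw [← mul_assoc, he, hexp]
      have h2 := hli.repr_eq_single ⟨i, hi⟩ (E' (e * x ^ i)) (by rw [h1])
      simp only [κ, dif_pos hj]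
      simp only [LinearMap.comp_apply, Finsupp.lapply_apply, LinearMap.coe_coe]
      erw [h2]
      simp [Finsupp.single_apply]
    · have : x ^ i = 0 := pow_eq_zero_of_le (by omega) hxm
      rw [this, mul_zero, map_zero, if_neg (by omega)]
  have comm (y) (hy : e * y * e = y) : x * y = y * x := by
    rw [exp1 y hy, Finset.mul_sum, Finset.sum_mul]
    refine Finset.sum_congr rfl fun i _ => ?_
    rw [mul_smul_comm, smul_mul_assoc, ← mul_assoc, hxe, mul_assoc, ← pow_succ, pow_succ', ← mul_assoc, hex]
  have commp (y) (hy : e * y * e = y) (r : ℕ) : x ^ r * y = y * x ^ r :=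
    Commute.pow_left (comm y hy) r
  have shift (y) (hy : e * y * e = y) (r j : ℕ) (hj : j < m) :
      κ j (x ^ r * y) = if r ≤ j then κ (j - r) y else 0 := by
    rw [commp y hy]
    conv_lhs => rw [exp1 y hy]
    rw [Finset.sum_mul, map_sum]
    simp only [smul_mul_assoc, hexx, map_smul, kap _ _ hj, smul_eq_mul, mul_ite, mul_one, mul_zero]
    split_ifs with h
    · rw [Finset.sum_eq_single (j - r)]
      · simp [h]
      · intro b _ hb
        rw [if_neg (by omega)]
      · intro hh
        simp at hh; omega
    · apply Finset.sum_eq_zero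
      intro i _
      rw [if_neg (by omega)]
  refine ⟨comm, κ 0, κ (m - 2), κ 1, κ (m - 1), ?_, ?_, ?_, ?_⟩
  · intro y hy
    have s1 := shift y hy 1 1 (by omega)
    have s2 := shift y hy (m - 1) 1 (by omega)
    have s3 := shift y hy 1 (m - 1) (by omega)
    have s4 := shift y hy (m - 1) (m - 1) (by omega)
    rw [pow_one] at s1 s3
    refine ⟨by rw [s1]; simp, by rw [s2, if_neg (by omega)], ?_, by rw [s4]; simp⟩
    rw [s3, if_pos (by omega)]; congr 1
  · intro y z hy hz
    have hye : y * e = y := by rw [← hy]; simp only [mul_assoc, he]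
    conv_lhs => rw [exp1 z hz, Finset.mul_sum, map_sum]
    have (i : ℕ) : κ 0 (y * κ i z • (e * x ^ i)) = κ i z * if i ≤ 0 then κ (0 - i) y else 0 := by
      rw [mul_smul_comm, map_smul, ← mul_assoc, hye, ← commp y hy, shift y hy i 0 (by omega)]; rfl
    simp only [this]
    rw [Finset.sum_eq_single 0]
    · simp [mul_comm]
    · intro b _ hb
      simp [hb]
    · intro h; simp at h; omega
  · have := kap 0 0 (by omega)
    simpa using this
  · intro y hy h0
    refine ⟨∑ i ∈ Finset.range (m - 1), κ (i + 1) y • (e * x ^ i), ?_, ?_⟩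
    · rw [Finset.mul_sum, Finset.sum_mul]
      refine Finset.sum_congr rfl fun i _ => ?_
      rw [mul_smul_comm, smul_mul_assoc, ← mul_assoc, he, hexp]
    · conv_lhs => rw [exp1 y hy, show m = (m - 1) + 1 by omega, Finset.sum_range_succ', h0, zero_smul, add_zero]
      rw [Finset.sum_mul]
      refine Finset.sum_congr rfl fun i _ => ?_
      rw [smul_mul_assoc, mul_assoc, pow_succ]
end coef
end
end CornerAux

namespace CornerAux
section
open CategoryTheory
section gm
variable {A : Type u} [Ring A] {ι : Type} [Fintype ι] [DecidableEq ι]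

/-- The free-by-`e` module on the generators of degree `i`. -/
def gV (e : A) (deg : ι → ℤ) (i : ℤ) : Submodule A (ι → A) where
  carrier := {v | ∀ g, v g * e = v g ∧ (deg g ≠ i → v g = 0)}
  add_mem' := by
    intro a b ha hb g
    refine ⟨by simp [add_mul, (ha g).1, (hb g).1], fun h => by simp [(ha g).2 h, (hb g).2 h]⟩
  zero_mem' := by intro g; simp
  smul_mem' := by
    intro c a ha g
    refine ⟨by simp [mul_assoc, (ha g).1], fun h => by simp [(ha g).2 h]⟩

/-- Projection to `gV`. -/
def gP {e : A} (he : e * e = e) (deg : ι → ℤ) (i : ℤ) : (ι → A) →ₗ[A] gV e deg i where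
  toFun v := ⟨fun g => if deg g = i then v g * e else 0, by
    intro g
    by_cases h : deg g = i <;> simp [h, mul_assoc, he]⟩
  map_add' a b := by
    ext g; by_cases h : deg g = i <;> simp [h, add_mul]
  map_smul' c a := by
    ext g; by_cases h : deg g = i <;> simp [h, mul_assoc]

theorem gP_coe {e : A} (he : e * e = e) (deg : ι → ℤ) (i : ℤ) (v : gV e deg i) :
    gP he deg i v.1 = v := by
  ext g
  by_cases h : deg g = i
  · simp [gP, h, (v.2 g).1]
  · simp [gP, h, (v.2 g).2 h]

theorem gV_proj {e : A} (he : e * e = e) (deg : ι → ℤ) (i : ℤ) :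
    Module.Projective A (gV e deg i) :=
  Module.Projective.of_split (gV e deg i).subtype (gP he deg i)
    (LinearMap.ext fun v => gP_coe he deg i v)

/-- Data of a differential given by a matrix over `eAe`. -/
structure GM (A : Type u) [Ring A] (e : A) (ι : Type) [Fintype ι] (deg : ι → ℤ) where
  he : e * e = e
  D : Matrix ι ι A
  De : ∀ g h, e * D g h * e = D g h
  Dd : ∀ g h, deg h ≠ deg g + 1 → D g h = 0
  Dsq : D * D = 0

variable {e : A} {deg : ι → ℤ}

/-- The differential. -/
def GM.d (G : GM A e ι deg) (i j : ℤ) : gV e deg i →ₗ[A] gV e deg j :=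
  (gP G.he deg j).comp (G.D.vecMulLinear.comp (gV e deg i).subtype)

theorem GM.e_mul (G : GM A e ι deg) (g h) : e * G.D g h = G.D g h := by
  rw [← G.De]; simp only [← mul_assoc, G.he]

theorem GM.mul_e (G : GM A e ι deg) (g h) : G.D g h * e = G.D g h := by
  rw [← G.De]; simp only [mul_assoc, G.he]

theorem GM.vecMul_supp (G : GM A e ι deg) {i : ℤ} (v : gV e deg i) (h : ι) (hh : deg h ≠ i + 1) :
    Matrix.vecMul v.1 G.D h = 0 := by
  rw [Matrix.vecMul, dotProduct]
  apply Finset.sum_eq_zero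
  intro g _
  by_cases hg : deg g = i
  · rw [G.Dd g h (by rw [hg]; exact hh), mul_zero]
  · rw [(v.2 g).2 hg, zero_mul]

theorem GM.vecMul_e (G : GM A e ι deg) (v : ι → A) (h : ι) :
    Matrix.vecMul v G.D h * e = Matrix.vecMul v G.D h := by
  rw [Matrix.vecMul, dotProduct, Finset.sum_mul]
  refine Finset.sum_congr rfl fun g _ => ?_
  rw [mul_assoc, G.mul_e]

theorem GM.d_succ (G : GM A e ι deg) (i : ℤ) (v : gV e deg i) :
    (G.d i (i + 1) v).1 = Matrix.vecMul v.1 G.D := by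
  ext h
  by_cases hh : deg h = i + 1
  · simp [GM.d, gP, hh, G.vecMul_e]
  · simp [GM.d, gP, hh, G.vecMul_supp v h hh]

theorem GM.d_ne (G : GM A e ι deg) (i j : ℤ) (hij : i + 1 ≠ j) : G.d i j = 0 := by
  ext v h
  by_cases hh : deg h = j
  · simp [GM.d, gP, hh, G.vecMul_supp v h (by rw [hh]; exact hij.symm)]
  · simp [GM.d, gP, hh]

/-- The cochain complex. -/
def GM.K (G : GM A e ι deg) : CochainComplex (ModuleCat.{u} A) ℤ where
  X i := ModuleCat.of A (gV e deg i)
  d i j := ModuleCat.ofHom (G.d i j)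
  shape i j hij := by rw [G.d_ne i j hij]; rfl
  d_comp_d' i j l hij hjl := by
    simp only [ComplexShape.up_Rel] at hij hjl
    subst hij hjl
    rw [← ModuleCat.ofHom_comp]
    have : (G.d (i + 1) (i + 1 + 1)).comp (G.d i (i + 1)) = 0 := by
      apply LinearMap.ext
      intro v
      apply Subtype.ext
      rw [LinearMap.comp_apply, GM.d_succ, GM.d_succ, Matrix.vecMul_vecMul, G.Dsq,
        Matrix.vecMul_zero]
      rfl
    rw [this]; rfl

/-- Standard generators. -/
def gE (he : e * e = e) (deg : ι → ℤ) (i : ℤ) (g : ι) : gV e deg i := gP he deg i (Pi.single g e)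

theorem gE_ne (he : e * e = e) {i : ℤ} {g : ι} (h : deg g ≠ i) : gE he deg i g = 0 := by
  ext l
  by_cases hl : l = g
  · subst hl; simp [gE, gP, h]
  · simp [gE, gP, hl]

theorem gE_val (he : e * e = e) (g : ι) : (gE he deg (deg g) g).1 = Pi.single g e := by
  ext l
  by_cases hl : l = g
  · subst hl; simp [gE, gP, he]
  · simp [gE, gP, hl]

theorem gE_sum (he : e * e = e) {i : ℤ} (v : gV e deg i) :
    v = ∑ g, v.1 g • gE he deg i g := by
  conv_lhs => rw [← gP_coe he deg i v]
  have : v.1 = ∑ g, v.1 g • (Pi.single g e : ι → A) := by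
    ext l
    simp [Finset.sum_apply, Pi.single_apply, (v.2 l).1]
  conv_lhs => rw [this, map_sum]
  simp [gE]

variable {G G' G'' : GM A e ι deg}

/-- The linear maps underlying a chain map. -/
def lf (f : G.K ⟶ G'.K) (i : ℤ) : gV e deg i →ₗ[A] gV e deg i := (f.f i).hom

/-- The matrix of a chain map. -/
def mat (f : G.K ⟶ G'.K) : Matrix ι ι A := fun g => (lf f (deg g) (gE G.he deg (deg g) g)).1

theorem lf_val (f : G.K ⟶ G'.K) (i : ℤ) (v : gV e deg i) :
    (lf f i v).1 = Matrix.vecMul v.1 (mat f) := by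
  conv_lhs => rw [gE_sum G.he v]
  rw [map_sum]
  ext h
  rw [Matrix.vecMul, dotProduct, AddSubmonoidClass.coe_finset_sum, Finset.sum_apply]
  refine Finset.sum_congr rfl fun g _ => ?_
  by_cases hg : deg g = i
  · subst hg
    rw [map_smul]; rfl
  · rw [gE_ne G.he hg, smul_zero, map_zero, (v.2 g).2 hg]; simp

theorem mat_e (f : G.K ⟶ G'.K) (g h : ι) : e * mat f g h * e = mat f g h := by
  have h1 : mat f g h * e = mat f g h := ((lf f (deg g) (gE G.he deg (deg g) g)).2 h).1
  have h2 : e * mat f g h = mat f g h := by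
    have := congrFun (lf_val f (deg g) (gE G.he deg (deg g) g)) h
    rw [gE_val, Matrix.single_vecMul] at this
    exact this.symm
  rw [h2, h1]

theorem mat_deg (f : G.K ⟶ G'.K) (g h : ι) (hd : deg g ≠ deg h) : mat f g h = 0 :=
  ((lf f (deg g) (gE G.he deg (deg g) g)).2 h).2 hd.symm

theorem mat_comp (f : G.K ⟶ G'.K) (f' : G'.K ⟶ G''.K) : mat (f ≫ f') = mat f * mat f' := by
  ext g h
  have : mat (f ≫ f') g = (lf f' (deg g) (lf f (deg g) (gE G.he deg (deg g) g))).1 := rfl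
  rw [this, lf_val]
  rfl

theorem mat_sub (f f' : G.K ⟶ G'.K) : mat (f - f') = mat f - mat f' := rfl

theorem mat_id : mat (𝟙 G.K) = Matrix.diagonal (fun _ => e) := by
  ext g h
  have : mat (𝟙 G.K) g = (gE G.he deg (deg g) g).1 := rfl
  rw [this, gE_val, Matrix.diagonal_apply, Pi.single_apply]
  simp [eq_comm]

theorem mat_comm (f : G.K ⟶ G'.K) : G.D * mat f = mat f * G'.D := by
  have key (g : ι) : Matrix.vecMul (Pi.single g e) (G.D * mat f) =
      Matrix.vecMul (Pi.single g e) (mat f * G'.D) := by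
    rw [← Matrix.vecMul_vecMul, ← Matrix.vecMul_vecMul, ← gE_val G.he g, ← GM.d_succ, ← lf_val,
      ← lf_val, ← GM.d_succ]
    have := f.comm (deg g) (deg g + 1)
    have h2 := congrArg (fun z => (ModuleCat.Hom.hom z) (gE G.he deg (deg g) g)) this
    exact (congrArg Subtype.val h2).symm
  ext g h
  have := congrFun (key g) h
  rw [Matrix.single_vecMul, Matrix.single_vecMul] at this
  simp only [Matrix.row, Pi.smul_apply, MulOpposite.smul_eq_mul_unop, smul_eq_mul, Matrix.mul_apply, Finset.mul_sum, ← mul_assoc, G.e_mul] at this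
  rw [Matrix.mul_apply, Matrix.mul_apply, this]
  refine Finset.sum_congr rfl fun l _ => ?_
  rw [← mat_e f g l]; simp only [← mul_assoc, G.he]

theorem hom_ext_mat {f f' : G.K ⟶ G'.K} (h : mat f = mat f') : f = f' := by
  apply HomologicalComplex.hom_ext
  intro i
  apply ModuleCat.hom_ext
  apply LinearMap.ext
  intro v
  apply Subtype.ext
  have h1 := lf_val f i v
  have h2 := lf_val f' i v
  rw [h, ← h2] at h1
  exact h1

end gm
end
end CornerAux

namespace CornerAux
section
open CategoryTheory
section fam

/-- Coefficient data for a uniserial corner `eAe`. -/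
structure CF (k : Type*) {A : Type*} [Field k] [Ring A] [Algebra k A] (e x : A) (m : ℕ) where
  he : e * e = e
  hx : e * x * e = x
  hxm : x ^ m = 0
  hx1 : x ^ (m - 1) ≠ 0
  hm : 3 ≤ m
  comm : ∀ y, e * y * e = y → x * y = y * x
  p : A →ₗ[k] k
  q : A →ₗ[k] k
  u : A →ₗ[k] k
  w : A →ₗ[k] k
  uw : ∀ y, e * y * e = y → u (x * y) = p y ∧ u (x ^ (m - 1) * y) = 0 ∧
        w (x * y) = q y ∧ w (x ^ (m - 1) * y) = p y
  pmul : ∀ y z, e * y * e = y → e * z * e = z → p (y * z) = p y * p z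
  pe : p e = 1
  pz : ∀ y, e * y * e = y → p y = 0 → ∃ b, e * b * e = b ∧ y = b * x

variable {k A : Type u} [Field k] [Ring A] [Algebra k A] {e x : A} {m : ℕ}

theorem CF.ex (C : CF k e x m) : e * x = x := by rw [← C.hx]; simp only [← mul_assoc, C.he]
theorem CF.xe (C : CF k e x m) : x * e = x := by rw [← C.hx]; simp only [mul_assoc, C.he]
theorem CF.xp (C : CF k e x m) (n : ℕ) : e * x ^ (n + 1) * e = x ^ (n + 1) := by
  conv_lhs => rw [pow_succ', ← mul_assoc, C.ex, ← pow_succ', pow_succ, mul_assoc, C.xe, ← pow_succ]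

/-- The family of complexes. -/
def fam (C : CF k e x m) (N : ℕ) (t : k) : GM A e (Idx N) (dg N) where
  he := C.he
  D := Matrix.of fun g h => mD1 k N g h • x + mD2 N t g h • x ^ (m - 1)
  De g h := by
    rw [Matrix.of_apply]
    have h1 := C.xp (m - 2)
    rw [show m - 2 + 1 = m - 1 by have := C.hm; omega] at h1
    rw [mul_add, add_mul, mul_smul_comm, smul_mul_assoc, C.hx, mul_smul_comm, smul_mul_assoc, h1]
  Dd g h hd := by rw [Matrix.of_apply, mD1_deg N g h hd, mD2_deg N t g h hd]; simp
  Dsq := by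
    have h3 := C.hm
    have z1 : x * x ^ (m - 1) = 0 := by
      rw [← pow_succ', show m - 1 + 1 = m by omega, C.hxm]
    have z2 : x ^ (m - 1) * x = 0 := by
      rw [← pow_succ, show m - 1 + 1 = m by omega, C.hxm]
    have z3 : x ^ (m - 1) * x ^ (m - 1) = 0 := by
      rw [← pow_add]; exact pow_eq_zero_of_le (by omega) C.hxm
    ext g h
    rw [Matrix.mul_apply]
    simp only [Matrix.of_apply, mul_add, add_mul, smul_mul_smul_comm, z1, z2, z3, smul_zero, add_zero]
    rw [← Finset.sum_smul, ← Matrix.mul_apply, mD1_sq]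
    simp

/-- Leading coefficient matrix. -/
def F0 (C : CF k e x m) {N : ℕ} {s t : k} (f : (fam C N s).K ⟶ (fam C N t).K) :
    Matrix (Idx N) (Idx N) k := fun g h => C.p (mat f g h)

theorem F0_comp (C : CF k e x m) {N : ℕ} {s t r : k} (f : (fam C N s).K ⟶ (fam C N t).K)
    (f' : (fam C N t).K ⟶ (fam C N r).K) : F0 C (f ≫ f') = F0 C f * F0 C f' := by
  ext g h
  rw [Matrix.mul_apply]
  simp only [F0]
  rw [mat_comp, Matrix.mul_apply, map_sum]
  exact Finset.sum_congr rfl fun l _ => C.pmul _ _ (mat_e f g l) (mat_e f' l h)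

theorem fam_hom (C : CF k e x m) {N : ℕ} {s t : k} (f : (fam C N s).K ⟶ (fam C N t).K) :
    ∃ c δ ε : k, c * (s - t) = 0 ∧
      F0 C f = c • (1 : Matrix (Idx N) (Idx N) k) +
        (δ • Matrix.single (Sum.inl 2) (Sum.inl 1) 1 +
         ε • Matrix.single (Sum.inl 8) (Sum.inl 7) 1) := by
  have hc (g h) : ∑ l, (mD1 k N g l • x + mD2 N s g l • x ^ (m - 1)) * mat f l h =
      ∑ l, (mD1 k N l h • x + mD2 N t l h • x ^ (m - 1)) * mat f g l := by
    have := congrFun (congrFun (mat_comm f) g) h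
    rw [Matrix.mul_apply, Matrix.mul_apply] at this
    refine this.trans (Finset.sum_congr rfl fun l _ => ?_)
    have c1 := C.comm _ (mat_e f g l)
    have c2 : x ^ (m - 1) * mat f g l = mat f g l * x ^ (m - 1) := Commute.pow_left c1 _
    change mat f g l * (mD1 k N l h • x + mD2 N t l h • x ^ (m - 1)) = _
    rw [mul_add, add_mul, mul_smul_comm, mul_smul_comm, smul_mul_assoc, smul_mul_assoc, c1, c2]
  apply family_hom N s t (F0 C f) (Matrix.of fun g h => C.q (mat f g h))
  · intro g h hd
    simp [F0, mat_deg f g h hd]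
  · intro g h hd
    simp [mat_deg f g h hd]
  · ext g h
    rw [Matrix.mul_apply, Matrix.mul_apply]
    have := congrArg C.u (hc g h)
    simp only [map_sum, add_mul, smul_mul_assoc, map_add, map_smul,
      (C.uw _ (mat_e f _ _)).1, (C.uw _ (mat_e f _ _)).2.1, smul_eq_mul, mul_zero, add_zero] at this
    refine this.trans (Finset.sum_congr rfl fun l _ => mul_comm _ _)
  · ext g h
    simp only [Matrix.add_apply, Matrix.mul_apply, Matrix.of_apply]
    have := congrArg C.w (hc g h)
    simp only [map_sum, add_mul, smul_mul_assoc, map_add, map_smul,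
      (C.uw _ (mat_e f _ _)).2.2.1, (C.uw _ (mat_e f _ _)).2.2.2, smul_eq_mul,
      Finset.sum_add_distrib] at this
    rw [add_comm] at this
    refine this.trans ?_
    rw [add_comm]
    simp only [F0, Matrix.of_apply, mul_comm]

theorem nil_of_F0 (C : CF k e x m) {N : ℕ} {s : k} (f : End (fam C N s).K) (hf : F0 C f = 0) :
    f ^ m = 0 := by
  have key (n : ℕ) (g h) : ∃ b, e * b * e = b ∧ mat (f ^ n : End (fam C N s).K) g h = b * x ^ n := by
    induction n generalizing g h with
    | zero =>
      have : mat (f ^ 0 : End (fam C N s).K) = Matrix.diagonal (fun _ => e) := by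
        rw [pow_zero]; exact mat_id
      rw [this, Matrix.diagonal_apply]
      by_cases hgh : g = h
      · exact ⟨e, by rw [C.he, C.he], by simp [hgh]⟩
      · exact ⟨0, by simp, by simp [hgh]⟩
    | succ n ih =>
      have : mat (f ^ (n + 1) : End (fam C N s).K) = mat f * mat (f ^ n : End (fam C N s).K) := by
        rw [pow_succ]; exact mat_comp _ _
      rw [this, Matrix.mul_apply]
      have h1 (g l) := C.pz _ (mat_e f g l) (congrFun (congrFun hf g) l)
      choose b hb1 hb2 using h1
      choose b' hb1' hb2' using ih
      refine ⟨∑ l, b g l * b' l h, ?_, ?_⟩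
      · rw [Finset.mul_sum, Finset.sum_mul]
        refine Finset.sum_congr rfl fun l _ => ?_
        rw [← hb1 g l, ← hb1' l h]
        simp only [mul_assoc, C.he]
        simp only [← mul_assoc, C.he]
      · rw [Finset.sum_mul]
        refine Finset.sum_congr rfl fun l _ => ?_
        rw [hb2, hb2', mul_assoc, ← mul_assoc x, C.comm _ (hb1' l h), pow_succ']
        simp only [mul_assoc]
  apply hom_ext_mat
  ext g h
  obtain ⟨b, _, hb⟩ := key m g h
  rw [hb, C.hxm, mul_zero]
  rfl

/-- Multiplication by a scalar as a chain map. -/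
def zc (C : CF k e x m) (N : ℕ) (s c : k) : End (fam C N s).K where
  f i := ModuleCat.ofHom
    { toFun := fun v => algebraMap k A c • v
      map_add' := fun a b => smul_add _ _ _
      map_smul' := fun a v => by
        rw [smul_smul, RingHom.id_apply, smul_smul, Algebra.commutes] }
  comm' i j _ := by
    apply ModuleCat.hom_ext
    apply LinearMap.ext
    intro v
    exact ((fam C N s).d i j).map_smul (algebraMap k A c) v

theorem mat_zc (C : CF k e x m) (N : ℕ) (s c : k) :
    mat (zc C N s c) = Matrix.diagonal (fun _ => c • e) := by
  ext g h
  have : mat (zc C N s c) g = algebraMap k A c • (gE C.he (dg N) (dg N g) g).1 := rfl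
  rw [this, gE_val, Matrix.diagonal_apply, Pi.smul_apply, Pi.single_apply]
  by_cases hgh : g = h
  · simp [hgh, Algebra.smul_def]
  · simp [hgh, Ne.symm hgh]

theorem zc_mul (C : CF k e x m) (N : ℕ) (s c d : k) : zc C N s c * zc C N s d = zc C N s (d * c) := by
  apply hom_ext_mat
  have : mat (zc C N s c * zc C N s d) = mat (zc C N s d) * mat (zc C N s c) := mat_comp _ _
  rw [this, mat_zc, mat_zc, mat_zc, Matrix.diagonal_mul_diagonal]
  congr 1; ext; rw [smul_mul_smul_comm, C.he]

theorem zc_one (C : CF k e x m) (N : ℕ) (s : k) : zc C N s 1 = 1 := by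
  apply hom_ext_mat
  have : mat (1 : End (fam C N s).K) = _ := mat_id
  rw [this, mat_zc]; simp

theorem zc_zero (C : CF k e x m) (N : ℕ) (s : k) : zc C N s 0 = 0 := by
  apply hom_ext_mat
  rw [mat_zc]; simp; rfl

theorem zc_comm (C : CF k e x m) (N : ℕ) (s c : k) (f : End (fam C N s).K) :
    Commute (zc C N s c) f := by
  apply hom_ext_mat
  have h1 : mat (zc C N s c * f) = mat f * mat (zc C N s c) := mat_comp _ _
  have h2 : mat (f * zc C N s c) = mat (zc C N s c) * mat f := mat_comp _ _
  rw [h1, h2, mat_zc]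
  ext g h
  rw [Matrix.mul_diagonal, Matrix.diagonal_mul, mul_smul_comm, smul_mul_assoc]
  rw [← mat_e f g h]
  simp only [mul_assoc, C.he]
  simp only [← mul_assoc, C.he]

theorem F0_zc (C : CF k e x m) (N : ℕ) (s c : k) : F0 C (zc C N s c) = c • 1 := by
  ext g h
  rw [F0, mat_zc, Matrix.diagonal_apply]
  by_cases hgh : g = h
  · simp [hgh, C.pe]
  · simp [hgh]

theorem n_mul_n {k : Type*} [Field k] (N : ℕ) (δ ε δ' ε' : k) :
    ((δ • Matrix.single (Sum.inl 2) (Sum.inl 1) 1 + ε • Matrix.single (Sum.inl 8) (Sum.inl 7) 1) *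
    (δ' • Matrix.single (Sum.inl 2) (Sum.inl 1) 1 +
      ε' • Matrix.single (Sum.inl 8) (Sum.inl 7) 1) : Matrix (Idx N) (Idx N) k) = 0 := by
  simp [mul_add, add_mul, Matrix.single_mul_single_of_ne]

/-- Endomorphisms are units or nilpotent. -/
theorem end_local (C : CF k e x m) {N : ℕ} {s : k} (f : End (fam C N s).K) :
    IsUnit f ∨ IsNilpotent f := by
  obtain ⟨c, δ, ε, _, hF⟩ := fam_hom C f
  have hn : IsNilpotent (f - zc C N s c) := by
    have h1 : F0 C (f - zc C N s c) = δ • Matrix.single (Sum.inl 2) (Sum.inl 1) 1 +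
         ε • Matrix.single (Sum.inl 8) (Sum.inl 7) 1 := by
      have : F0 C (f - zc C N s c) = F0 C f - F0 C (zc C N s c) := by
        ext g h
        change C.p (mat (f - zc C N s c) g h) = C.p (mat f g h) - C.p (mat (zc C N s c) g h)
        rw [← map_sub]; rfl
      rw [this, hF, F0_zc, add_sub_cancel_left]
    have h2 : F0 C ((f - zc C N s c) ^ 2) = 0 := by
      rw [pow_two]
      refine (F0_comp C _ _).trans ?_
      rw [h1, n_mul_n]
    refine ⟨2 * m, ?_⟩
    rw [pow_mul]
    exact nil_of_F0 C _ h2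
  by_cases hc : c = 0
  · right
    rwa [hc, zc_zero, sub_zero] at hn
  · left
    have hu : IsUnit (zc C N s c) := by
      refine ⟨⟨zc C N s c, zc C N s c⁻¹, ?_, ?_⟩, rfl⟩
      · rw [zc_mul, inv_mul_cancel₀ hc, zc_one]
      · rw [zc_mul, mul_inv_cancel₀ hc, zc_one]
    have := hn.isUnit_add_left_of_commute hu
      (((zc_comm C N s c _)).symm)
    simpa using this

theorem comp_nil (C : CF k e x m) {N : ℕ} {s t : k} (hst : s ≠ t)
    (f : (fam C N s).K ⟶ (fam C N t).K) (g : (fam C N t).K ⟶ (fam C N s).K) :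
    ∃ n : ℕ, (show End (fam C N s).K from f ≫ g) ^ n = 0 := by
  obtain ⟨c, δ, ε, hc, hF⟩ := fam_hom C f
  obtain ⟨c', δ', ε', hc', hF'⟩ := fam_hom C g
  have e1 : c = 0 := by
    rcases mul_eq_zero.1 hc with h | h
    · exact h
    · exact absurd (sub_eq_zero.1 h) hst
  have e2 : c' = 0 := by
    rcases mul_eq_zero.1 hc' with h | h
    · exact h
    · exact absurd (sub_eq_zero.1 h).symm hst
  refine ⟨m, nil_of_F0 C _ ?_⟩
  refine (F0_comp C _ _).trans ?_
  rw [ hF, hF', e1, e2, zero_smul, zero_add, zero_add, n_mul_n]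

end fam
end
end CornerAux

namespace CornerAux
section
open CategoryTheory Limits
section hom
variable {k A : Type u} [Field k] [IsAlgClosed k] [Ring A] [Algebra k A] [FiniteDimensional k A]
  {e x : A} {m : ℕ}

theorem dg_bd (N : ℕ) (g : Idx N) : -1 ≤ dg N g ∧ dg N g ≤ 4 + N := by
  rcases g with a | i
  · fin_cases a <;> simp [dg] <;> omega
  · simp only [dg]; omega

theorem gV_zero {N : ℕ} {i : ℤ} (h : i < -1 ∨ 4 + (N : ℤ) < i) (v : gV e (dg N) i) : v = 0 := by
  ext g
  have := dg_bd N g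
  exact (v.2 g).2 (by omega)

theorem fam_X_zero (C : CF k e x m) (N : ℕ) (t : k) {i : ℤ} (h : i < -1 ∨ 4 + (N : ℤ) < i) :
    IsZero ((fam C N t).K.X i) := by
  have : Subsingleton ((fam C N t).K.X i) := ⟨fun a b => (gV_zero h a).trans (gV_zero h b).symm⟩
  exact ModuleCat.isZero_of_subsingleton _

theorem fam_kproj (C : CF k e x m) (N : ℕ) (t : k) : (fam C N t).K.IsKProjective := by
  have h1 : (fam C N t).K.IsStrictlyLE (4 + N) := by
    rw [CochainComplex.isStrictlyLE_iff]
    intro i hi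
    exact fam_X_zero C N t (Or.inr hi)
  have h2 (n : ℤ) : Projective ((fam C N t).K.X n) :=
    (IsProjective.iff_projective (gV e (dg N) n)).1 (gV_proj C.he (dg N) n)
  exact CochainComplex.isKProjective_of_projective _ (4 + N)

theorem homology_zero (C : CF k e x m) (N : ℕ) (t : k) {i : ℤ} (h : i < -1 ∨ 4 + (N : ℤ) < i) :
    IsZero ((fam C N t).K.homology i) := by
  rw [← HomologicalComplex.exactAt_iff_isZero_homology]
  exact ShortComplex.exact_of_isZero_X₂ _ (fam_X_zero C N t h)

theorem homology_bot (C : CF k e x m) (N : ℕ) (t : k) :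
    ¬ IsZero ((fam C N t).K.homology (-1)) := by
  rw [← HomologicalComplex.exactAt_iff_isZero_homology,
    HomologicalComplex.exactAt_iff' _ (-2) (-1) 0 (by simp) (by simp),
    ShortComplex.moduleCat_exact_iff]
  intro H
  have h3 := C.hm
  let v : gV e (dg N) (-1) := x ^ (m - 1) • gE C.he (dg N) (dg N (Sum.inl 0)) (Sum.inl 0)
  have hv : v.1 = x ^ (m - 1) • (Pi.single (Sum.inl 0) e : Idx N → A) := by
    rw [← gE_val C.he]; rfl
  have hv0 : (fam C N t).d (-1) (-1 + 1) v = 0 := by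
    apply Subtype.ext
    rw [GM.d_succ, hv, Matrix.smul_vecMul, Matrix.single_vecMul]
    ext h
    have z1 : x ^ (m - 1) * x = 0 := by
      rw [← pow_succ, show m - 1 + 1 = m by omega, C.hxm]
    have z2 : x ^ (m - 1) * x ^ (m - 1) = 0 := by
      rw [← pow_add]; exact pow_eq_zero_of_le (by omega) C.hxm
    change x ^ (m - 1) * (e * (fam C N t).D _ h) = 0
    rw [GM.e_mul]
    simp [fam, mul_add, z1, z2]
  obtain ⟨w, hw⟩ := H v hv0
  have hw0 : w = 0 := gV_zero (Or.inl (by norm_num)) w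
  rw [hw0, map_zero] at hw
  have h4 : v.1 (Sum.inl 0) = 0 := by rw [← hw]; rfl
  rw [hv] at h4
  simp only [Pi.smul_apply, Pi.single_eq_same, smul_eq_mul] at h4
  have h5 : x ^ (m - 1) * e = x ^ (m - 1) := by
    conv_lhs => rw [show m - 1 = m - 2 + 1 by omega, pow_succ, mul_assoc, C.xe, ← pow_succ,
      show m - 2 + 1 = m - 1 by omega]
  rw [h5] at h4
  exact C.hx1 h4

theorem homology_top (C : CF k e x m) (N : ℕ) (t : k) :
    ¬ IsZero ((fam C N t).K.homology (4 + N)) := by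
  rw [← HomologicalComplex.exactAt_iff_isZero_homology,
    HomologicalComplex.exactAt_iff' _ (3 + (N : ℤ)) (4 + (N : ℤ)) (5 + (N : ℤ)) (by simp; ring) (by simp; ring),
    ShortComplex.moduleCat_exact_iff]
  intro H
  have h3 := C.hm
  have hd : dg N (Sum.inr (Fin.last N)) = 4 + N := by simp [dg]
  obtain ⟨w, hw⟩ := H (gE C.he (dg N) (4 + N) (Sum.inr (Fin.last N)))
    (gV_zero (N := N) (Or.inr (by linarith)) _)
  have h1 := congrArg (fun v : gV e (dg N) (4 + N) => v.1 (Sum.inr (Fin.last N)) * x ^ (m - 1)) hw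
  have z1 : x * x ^ (m - 1) = 0 := by
    rw [← pow_succ', show m - 1 + 1 = m by omega, C.hxm]
  have z2 : x ^ (m - 1) * x ^ (m - 1) = 0 := by
    rw [← pow_add]; exact pow_eq_zero_of_le (by omega) C.hxm
  have h5 : e * x ^ (m - 1) = x ^ (m - 1) := by
    conv_lhs => rw [show m - 1 = m - 2 + 1 by omega, pow_succ', ← mul_assoc, C.ex, ← pow_succ',
      show m - 2 + 1 = m - 1 by omega]
  have h6 : (gE C.he (dg N) (4 + N) (Sum.inr (Fin.last N))).1 (Sum.inr (Fin.last N)) = e := by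
    simp [gE, gP, hd, C.he]
  have h7 (w : gV e (dg N) (3 + N)) : ((fam C N t).d (3 + N) (4 + N) w).1 (Sum.inr (Fin.last N)) * x ^ (m - 1) = 0 := by
    have (w' : Idx N → A) : Matrix.vecMul w' (fam C N t).D (Sum.inr (Fin.last N)) * x ^ (m - 1) = 0 := by
      rw [Matrix.vecMul, dotProduct, Finset.sum_mul]
      apply Finset.sum_eq_zero
      intro g _
      simp [fam, mul_assoc, add_mul, z1, z2]
    have h8 : ((fam C N t).d (3 + N) (4 + N) w).1 (Sum.inr (Fin.last N)) =
        Matrix.vecMul w.1 (fam C N t).D (Sum.inr (Fin.last N)) * e := by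
      simp [GM.d, gP, hd]
    rw [h8, mul_assoc, h5, this]
  simp only [h6, h5] at h1
  exact C.hx1 (h1.symm.trans (h7 w))

end hom

section dims
variable (k : Type u) {A : Type u} [Field k] [Ring A] [Algebra k A]

/-- Restriction to the base field. -/
noncomputable abbrev rk (M : ModuleCat.{u} A) : ModuleCat.{u} k :=
  (ModuleCat.restrictScalars (algebraMap k A)).obj M

theorem rk_mono {M N : ModuleCat.{u} A} (f : M ⟶ N) [Mono f] [hN : FiniteDimensional k (rk k N)] :
    FiniteDimensional k (rk k M) ∧ Module.finrank k (rk k M) ≤ Module.finrank k (rk k N) := by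
  let g : rk k M →ₗ[k] rk k N := ((ModuleCat.restrictScalars (algebraMap k A)).map f).hom
  have hg : Function.Injective g := (ModuleCat.mono_iff_injective f).1 inferInstance
  exact ⟨FiniteDimensional.of_injective g hg, LinearMap.finrank_le_finrank_of_injective hg⟩

theorem rk_epi {M N : ModuleCat.{u} A} (f : M ⟶ N) [Epi f] [hM : FiniteDimensional k (rk k M)] :
    FiniteDimensional k (rk k N) ∧ Module.finrank k (rk k N) ≤ Module.finrank k (rk k M) := by
  let g : rk k M →ₗ[k] rk k N := ((ModuleCat.restrictScalars (algebraMap k A)).map f).hom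
  have hg : Function.Surjective g := (ModuleCat.epi_iff_surjective f).1 inferInstance
  exact ⟨Module.Finite.of_surjective g hg, LinearMap.finrank_le_finrank_of_surjective hg⟩

theorem rk_free [FiniteDimensional k A] (ι : Type) [Finite ι] :
    FiniteDimensional k (rk k (ModuleCat.of A (ι → A))) := by
  let f : (ι → A) →ₗ[k] rk k (ModuleCat.of A (ι → A)) :=
    { toFun := fun a => a
      map_add' := fun a b => rfl
      map_smul' := fun c a => by
        funext i
        change c • a i = algebraMap k A c • a i
        rw [Algebra.smul_def]; rfl }
  exact Module.Finite.of_surjective f (fun y => ⟨y, rfl⟩)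

variable {k}
variable [FiniteDimensional k A] {e x : A} {m : ℕ}
theorem homology_dim (C : CF k e x m) (N : ℕ) (t : k) (i : ℤ) :
    FiniteDimensional k (rk k ((fam C N t).K.homology i)) ∧
    Module.finrank k (rk k ((fam C N t).K.homology i)) ≤
      Module.finrank k (rk k (ModuleCat.of A (Idx N → A))) := by
  have h0 := rk_free k (A := A) (Idx N)
  let f : (fam C N t).K.X i ⟶ ModuleCat.of A (Idx N → A) :=
    ModuleCat.ofHom (gV e (dg N) i).subtype
  have : Mono f := (ModuleCat.mono_iff_injective f).2 Subtype.val_injective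
  have h1 := rk_mono k f
  have := h1.1
  have h2 := rk_mono k ((fam C N t).K.iCycles i)
  have := h2.1
  have h3 := rk_epi k ((fam C N t).K.homologyπ i)
  exact ⟨h3.1, h3.2.trans (h2.2.trans h1.2)⟩
end dims
end
end CornerAux

namespace CornerAux
section
variable {k A : Type u} [Field k] [IsAlgClosed k] [Ring A] [Algebra k A] [FiniteDimensional k A]

theorem restrict_findim (J : Ideal A) : FiniteDimensional k
    ((ModuleCat.restrictScalars (algebraMap k A)).obj (ModuleCat.of A (A ⧸ J))) := by
  let f : A →ₗ[k] ((ModuleCat.restrictScalars (algebraMap k A)).obj (ModuleCat.of A (A ⧸ J))) :=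
    { toFun := fun a => (Submodule.Quotient.mk a : A ⧸ J)
      map_add' := fun a b => rfl
      map_smul' := fun c a => by
        rw [Algebra.smul_def]; rfl }
  exact Module.Finite.of_surjective f (fun y => by
    obtain ⟨a, ha⟩ := Submodule.Quotient.mk_surjective J y
    exact ⟨a, ha⟩)

/-- The local modules. -/
theorem exists_gen_of_repFinite (hrf : IsRepFinite k A) {e : A} (he : e * e = e) (he0 : e ≠ 0)
    (hp : ∀ f g : A, f * f = f → g * g = g → f * g = 0 → g * f = 0 → f + g = e → f = 0 ∨ g = 0)
    (N : Submodule k A) (hN : ∀ y, y ∈ N ↔ e * y * e = y ∧ IsNilpotent y)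
    (hl : ∀ y, e * y * e = y → ∀ n ∈ N, y * n ∈ N) :
    ∃ x ∈ N, N ≤ Submodule.span k {x} ⊔ N * N := by
  by_contra! hcon
  have hee (y : A) (hy : e * y * e = y) : e * y = y := by rw [← hy]; simp only [← mul_assoc, he]
  have hee' (y : A) (hy : e * y * e = y) : y * e = y := by rw [← hy]; simp only [mul_assoc, he]
  obtain ⟨x, hxN, hx⟩ := Set.not_subset.1 (hcon 0 N.zero_mem)
  obtain ⟨y, hyN, hy⟩ := Set.not_subset.1 (hcon x hxN)
  simp only [SetLike.mem_coe] at hx hy hxN hyN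
  obtain ⟨ψ, hψy, hψ⟩ := Submodule.exists_le_ker_of_notMem hy
  obtain ⟨φ, hφx, hφ⟩ := Submodule.exists_le_ker_of_notMem hx
  have hφN (z) (hz : z ∈ N * N) : φ z = 0 := hφ (Submodule.mem_sup_right hz)
  have hψN (z) (hz : z ∈ N * N) : ψ z = 0 := hψ (Submodule.mem_sup_right hz)
  have hψx : ψ x = 0 := hψ (Submodule.mem_sup_left (Submodule.mem_span_singleton_self x))
  let I : k → Submodule k A := fun t => N ⊓ LinearMap.ker (φ - t • ψ)
  have hI (t : k) (n : A) : n ∈ I t ↔ n ∈ N ∧ φ n = t * ψ n := by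
    simp [I, sub_eq_zero]
  have hsc (y : A) (hy : e * y * e = y) : ∃ c : k, ∃ n ∈ N, y = c • e + n := by
    obtain ⟨c, hc⟩ := exists_scalar (k := k) he he0 hp y hy
    refine ⟨c, y - c • e, (hN _).2 ⟨?_, hc⟩, by simp⟩
    simp [mul_sub, sub_mul, hee y hy, hee' y hy, he]
  have hIl (t : k) (y n : A) (hy : e * y * e = y) (hn : n ∈ I t) : y * n ∈ I t := by
    obtain ⟨c, n', hn', rfl⟩ := hsc y hy
    rw [hI] at hn ⊢
    refine ⟨hl _ hy _ hn.1, ?_⟩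
    have h1 := Submodule.mul_mem_mul hn' hn.1
    rw [add_mul, smul_mul_assoc, hee n ((hN n).1 hn.1).1, map_add, map_add, hφN _ h1, hψN _ h1,
      map_smul, map_smul, hn.2]
    simp only [smul_eq_mul]; ring
  have hIr (t : k) (y n : A) (hy : e * y * e = y) (hn : n ∈ I t) : n * y ∈ I t := by
    obtain ⟨c, n', hn', rfl⟩ := hsc y hy
    rw [hI] at hn ⊢
    have h1 := Submodule.mul_mem_mul hn.1 hn'
    rw [mul_add, mul_smul_comm, hee' n ((hN n).1 hn.1).1]
    refine ⟨add_mem (N.smul_mem _ hn.1) (hl _ ((hN n).1 hn.1).1 _ hn'), ?_⟩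
    rw [map_add, map_add, hφN _ h1, hψN _ h1, map_smul, map_smul, hn.2]
    simp only [smul_eq_mul]; ring
  -- the left ideals
  let J : k → Ideal A := fun t =>
    { carrier := {a | ∀ b, e * b * a * e ∈ I t}
      add_mem' := fun {a a'} ha ha' b => by
        have := add_mem (ha b) (ha' b)
        rwa [← add_mul, ← mul_add] at this
      zero_mem' := fun b => by simp
      smul_mem' := fun c a ha b => by
        have := ha (b * c)
        simpa [mul_assoc] using this }
  have hJ (t : k) (a : A) : a ∈ J t ↔ ∀ b, e * b * a * e ∈ I t := Iff.rfl
  have hJI (t : k) (y : A) (hy : e * y * e = y) : y ∈ J t ↔ y ∈ I t := by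
    constructor
    · intro h
      have := h e
      rwa [he, hy] at this
    · intro h b
      have := hIl t (e * b * e) y (by simp only [← mul_assoc, he]; simp only [mul_assoc, he]) h
      rwa [mul_assoc _ y, hee' y hy, ← hee y hy, ← mul_assoc]
  have hJe (t : k) (a : A) : a - a * e ∈ J t := by
    intro b
    have : e * b * (a - a * e) * e = 0 := by
      simp only [mul_sub, sub_mul, mul_assoc, he, sub_self]
    rw [this]; exact zero_mem _
  have hcorner (b : A) : e * (e * b * e) * e = e * b * e := by
    simp only [← mul_assoc, he]; simp only [mul_assoc, he]
  have heJ (t : k) : e ∉ J t := by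
    intro h
    rw [hJI t e (by rw [he, he]), hI] at h
    obtain ⟨n, hn⟩ := ((hN e).1 h.1).2
    have : ∀ n, e ^ (n + 1) = e := by
      intro n; induction n with
      | zero => simp
      | succ n ih => rw [pow_succ, ih, he]
    have h2 := this n
    rw [pow_succ, hn, zero_mul] at h2
    exact he0 h2.symm
  -- indecomposability
  have hind (t : k) : Indec (ModuleCat.of A (A ⧸ J t)) := by
    refine ⟨?_, ?_⟩
    · intro h
      have hs := ModuleCat.subsingleton_of_isZero h
      apply heJ t
      rw [← Submodule.Quotient.mk_eq_zero]
      exact Subsingleton.elim (α := A ⧸ J t) _ _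
    · intro F hF
      let f : (A ⧸ J t) →ₗ[A] (A ⧸ J t) := F.hom
      have hff : ∀ v, f (f v) = f v := fun v => by
        have := congrArg (fun G => G.hom v) hF
        simpa using this
      obtain ⟨a', ha'⟩ := Submodule.Quotient.mk_surjective (J t) (f (Submodule.Quotient.mk 1))
      set a := e * a' * e with hadef
      have hac : e * a * e = a := hcorner a'
      have hfa (b : A) : f (Submodule.Quotient.mk b) = Submodule.Quotient.mk (b * a) := by
        have h1 : (Submodule.Quotient.mk b : A ⧸ J t) = (b * e) • Submodule.Quotient.mk 1 := by
          rw [← Submodule.Quotient.mk_smul, Submodule.Quotient.eq, smul_eq_mul, mul_one]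
          exact hJe t b
        rw [h1, map_smul, ← ha', ← Submodule.Quotient.mk_smul, Submodule.Quotient.eq, smul_eq_mul,
          hadef]
        have := hJe t (b * e * a')
        simp only [← mul_assoc] at this ⊢
        exact this
      have hpow (n : ℕ) (b : A) : (f ^ n) (Submodule.Quotient.mk b) =
          Submodule.Quotient.mk (b * a ^ n) := by
        induction n with
        | zero => simp
        | succ n ih => rw [pow_succ', Module.End.mul_apply, ih, hfa, mul_assoc, ← pow_succ]
      have hfi : IsIdempotentElem f := by
        apply LinearMap.ext; intro v; exact hff v
      obtain ⟨c, n, hn, han⟩ := hsc a hac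
      have haa : a * a - a ∈ J t := by
        have := hff (Submodule.Quotient.mk 1)
        rw [hfa, hfa, Submodule.Quotient.eq, one_mul] at this
        exact this
      have haa' : a * a - a ∈ N := by
        have hcc : e * (a * a - a) * e = a * a - a := by
          rw [mul_sub, sub_mul, hac, ← mul_assoc, hee a hac, mul_assoc a, hee' a hac]
        rw [hJI t _ hcc, hI] at haa
        exact haa.1
      have hneN : e ∉ N := by
        intro h
        obtain ⟨n, hn⟩ := ((hN e).1 h).2
        have h3 : ∀ n, e ^ (n + 1) = e := by
          intro n; induction n with
          | zero => simp
          | succ n ih => rw [pow_succ, ih, he]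
        have h2 := h3 n
        rw [pow_succ, hn, zero_mul] at h2
        exact he0 h2.symm
      have hc : c * c - c = 0 := by
        by_contra hc
        apply hneN
        have hen := hee n ((hN n).1 hn).1
        have hne := hee' n ((hN n).1 hn).1
        have hnn := hl n ((hN n).1 hn).1 n hn
        have : (c * c - c) • e = (a * a - a) - ((2 * c - 1) • n + n * n) := by
          rw [han]
          simp only [add_mul, mul_add, smul_mul_assoc, mul_smul_comm, he, hen, hne]
          module
        have h4 : (c * c - c) • e ∈ N := by
          rw [this]
          exact sub_mem haa' (add_mem (N.smul_mem _ hn) hnn)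
        exact (N.smul_mem_iff hc).1 h4
      have hc' : c = 0 ∨ c = 1 := by
        rcases mul_eq_zero.1 (show c * (c - 1) = 0 by rw [← hc]; ring) with h | h
        · exact Or.inl h
        · exact Or.inr (sub_eq_zero.1 h)
      rcases hc' with rfl | rfl
      · left
        rw [zero_smul, zero_add] at han
        obtain ⟨r, hr⟩ := ((hN n).1 hn).2
        apply ModuleCat.hom_ext
        apply LinearMap.ext
        intro v
        obtain ⟨b, rfl⟩ := Submodule.Quotient.mk_surjective (J t) v
        have h5 : f ^ (r + 1) = f := hfi.pow_succ_eq r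
        have h6 := hpow (r + 1) b
        rw [h5, han, pow_succ, hr] at h6
        change f _ = 0
        rw [h6]; simp
      · right
        obtain ⟨r, hr⟩ := ((hN n).1 hn).2
        have h5 : (1 - f) ^ (r + 1) = 1 - f := (hfi.one_sub).pow_succ_eq r
        have hpow' (n' : ℕ) (b : A) : ((1 - f) ^ n') (Submodule.Quotient.mk b) =
            Submodule.Quotient.mk (b * (-n) ^ n') := by
          induction n' with
          | zero => simp
          | succ n' ih =>
            rw [pow_succ', Module.End.mul_apply, ih, LinearMap.sub_apply, Module.End.one_apply, hfa,
              ← Submodule.Quotient.mk_sub, Submodule.Quotient.eq]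
            rw [han, one_smul, pow_succ]
            have := hJe t (b * (-n) ^ n')
            convert this using 1
            simp only [mul_add, mul_neg, mul_assoc]
            abel
        apply ModuleCat.hom_ext
        apply LinearMap.ext
        intro v
        obtain ⟨b, rfl⟩ := Submodule.Quotient.mk_surjective (J t) v
        have h6 := hpow' (r + 1) b
        rw [h5, neg_pow, pow_succ n, hr] at h6
        simp only [zero_mul, mul_zero, Submodule.Quotient.mk_zero, LinearMap.sub_apply,
          Module.End.one_apply] at h6
        exact (sub_eq_zero.1 h6).symm
  obtain ⟨ι, hι, rep, hrep⟩ := hrf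
  choose F hF using fun t : k => hrep _ (restrict_findim (k := k) (J t)) (hind t)
  have : Infinite k := IsAlgClosed.instInfinite
  obtain ⟨s, t, hst, hFst⟩ := Finite.exists_ne_map_eq_of_infinite F
  have hiso : Nonempty (ModuleCat.of A (A ⧸ J s) ≅ ModuleCat.of A (A ⧸ J t)) := by
    obtain ⟨i1⟩ := hF s
    obtain ⟨i2⟩ := hF t
    rw [← hFst] at i2
    exact ⟨i1 ≪≫ i2.symm⟩
  obtain ⟨i⟩ := hiso
  let θ : (A ⧸ J s) ≃ₗ[A] (A ⧸ J t) := i.toLinearEquiv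
  let n : A := ((s * ψ y - φ y) / φ x) • x + y
  have hnN : n ∈ N := add_mem (N.smul_mem _ hxN) hyN
  have hn1 : φ n = s * ψ y := by
    simp only [n, map_add, map_smul, smul_eq_mul]
    field_simp
    ring
  have hn2 : ψ n = ψ y := by simp [n, hψx]
  have hns : n ∈ I s := by rw [hI, hn1, hn2]; exact ⟨hnN, rfl⟩
  have hne := (hN n).1 hnN
  have hkill (v : A ⧸ J s) : n • v = 0 := by
    obtain ⟨b, rfl⟩ := Submodule.Quotient.mk_surjective (J s) v
    rw [← Submodule.Quotient.mk_smul, Submodule.Quotient.mk_eq_zero, smul_eq_mul]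
    intro b'
    have h1 := hIr s (e * b * e) _ (hcorner b) (hIl s (e * b' * e) n (hcorner b') hns)
    convert h1 using 1
    have h2 : e * n = n := hee n hne.1
    have h3 : n * e = n := hee' n hne.1
    calc e * b' * (n * b) * e = e * b' * (e * n * e) * b * e := by rw [hne.1]; simp only [mul_assoc]
      _ = e * b' * (e * e * n * (e * e)) * b * e := by rw [he]
      _ = e * b' * e * (e * n * e) * (e * b * e) := by simp only [mul_assoc]
      _ = _ := by rw [hne.1]
  have h7 : n • (Submodule.Quotient.mk 1 : A ⧸ J t) = 0 := by
    have := congrArg θ (hkill (θ.symm (Submodule.Quotient.mk 1)))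
    simpa using this
  rw [← Submodule.Quotient.mk_smul, Submodule.Quotient.mk_eq_zero, smul_eq_mul, mul_one,
    hJI t n hne.1, hI, hn1, hn2] at h7
  exact hst (mul_right_cancel₀ hψy h7.2)

theorem part_one (hrf : IsRepFinite k A) (e : A) (hpr : IsPrimitiveIdem A e) :
    ∃ (m : ℕ) (x : A), 1 ≤ m ∧
      e * x * e = x ∧ x ^ m = 0 ∧
      LinearIndependent k (fun i : Fin m => e * x ^ (i : ℕ)) ∧
      (∀ y : A, e * y * e ∈ Submodule.span k (Set.range fun i : Fin m => e * x ^ (i : ℕ))) := by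
  obtain ⟨he, he0, hp⟩ := hpr
  have hee (y : A) (hy : e * y * e = y) : e * y = y := by rw [← hy]; simp only [← mul_assoc, he]
  have hee' (y : A) (hy : e * y * e = y) : y * e = y := by rw [← hy]; simp only [mul_assoc, he]
  have : IsArtinianRing A := IsArtinianRing.of_finite k A
  obtain ⟨r, hr⟩ := IsArtinianRing.isNilpotent_jacobson_bot (R := A)
  have hjn : ∀ y ∈ Ideal.jacobson (⊥ : Ideal A), IsNilpotent y := by
    intro y hy
    refine ⟨r, ?_⟩
    have h := Ideal.pow_mem_pow hy r
    rw [hr] at h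
    simpa using h
  let N : Submodule k A :=
    { carrier := {y | e * y * e = y ∧ y ∈ Ideal.jacobson (⊥ : Ideal A)}
      add_mem' := fun {a b} ha hb => ⟨by rw [mul_add, add_mul, ha.1, hb.1], add_mem ha.2 hb.2⟩
      zero_mem' := ⟨by simp, zero_mem _⟩
      smul_mem' := fun c a ha => ⟨by rw [mul_smul_comm, smul_mul_assoc, ha.1], by
        rw [Algebra.smul_def]; exact Ideal.mul_mem_left _ _ ha.2⟩ }
  have hN : ∀ y, y ∈ N ↔ e * y * e = y ∧ IsNilpotent y := fun y =>
    ⟨fun h => ⟨h.1, hjn y h.2⟩, fun h => ⟨h.1, nil_mem_jacobson (k := k) he he0 hp y h.1 h.2⟩⟩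
  have hl : ∀ y, e * y * e = y → ∀ n ∈ N, y * n ∈ N := fun y hy n hn =>
    ⟨by rw [← mul_assoc, hee y hy, mul_assoc, hee' n hn.1], Ideal.mul_mem_left _ _ hn.2⟩
  obtain ⟨x, hxN, hx⟩ := exists_gen_of_repFinite hrf he he0 hp N hN hl
  obtain ⟨r', hr'⟩ := jac_pow (k := k) (A := A)
  have hgen := gen_of_gen_mod_sq N r' (hr' N fun y hy => hy.2) x hxN hx (by
    rw [Submodule.mul_le]
    exact fun a ha b hb => hl a ha.1 b hb)
  have hex := hee x hxN.1
  have hxnil := ((hN x).1 hxN).2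
  have hnz : Nontrivial A := ⟨⟨e, 0, he0⟩⟩
  have hm1 : 1 ≤ nilpotencyClass x := Nat.one_le_iff_ne_zero.2 (pos_nilpotencyClass_iff.2 hxnil).ne'
  have hxm : x ^ nilpotencyClass x = 0 := pow_nilpotencyClass hxnil
  refine ⟨nilpotencyClass x, x, hm1, hxN.1, hxm, ?_, ?_⟩
  · apply pow_indep _ _ _ hm1 hxm
    rcases Nat.eq_or_lt_of_le hm1 with h | h
    · rw [← h]; simpa using he0
    · have h1 := pow_pred_nilpotencyClass hxnil
      obtain ⟨s, hs⟩ : ∃ s, nilpotencyClass x - 1 = s + 1 := ⟨nilpotencyClass x - 2, by omega⟩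
      rw [hs] at h1 ⊢
      rwa [pow_succ', ← mul_assoc, hex, ← pow_succ']
  · intro y
    set S := Submodule.span k (Set.range fun i : Fin (nilpotencyClass x) => e * x ^ (i : ℕ))
    have hS (i : ℕ) : e * x ^ i ∈ S := by
      by_cases hi : i < nilpotencyClass x
      · exact Submodule.subset_span ⟨⟨i, hi⟩, rfl⟩
      · rw [pow_eq_zero_of_le (not_lt.1 hi) hxm, mul_zero]; exact zero_mem _
    have hNS : N ≤ S := by
      refine hgen.trans ?_
      rw [Submodule.span_le]
      rintro _ ⟨i, rfl⟩
      have := hS (i + 1)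
      rwa [pow_succ', ← mul_assoc, hex, ← pow_succ'] at this
    have hyc : e * (e * y * e) * e = e * y * e := by
      simp only [← mul_assoc, he]; simp only [mul_assoc, he]
    obtain ⟨c, hc⟩ := exists_scalar (k := k) he he0 hp (e * y * e) hyc
    have h1 : e * y * e - c • e ∈ N := (hN _).2 ⟨by
      rw [mul_sub, sub_mul, hyc]; simp [he], hc⟩
    have h2 := add_mem (hNS h1) (S.smul_mem c (hS 0))
    simpa using h2
end
end CornerAux

namespace CornerAux
section
open CategoryTheory Limits
section der
variable {k A : Type u} [Field k] [IsAlgClosed k] [Ring A] [Algebra k A] [FiniteDimensional k A]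
  [HasDerivedCategory.{u} (ModuleCat.{u} A)] {e x : A} {m : ℕ}

/-- The objects in the derived category. -/
noncomputable def XX (C : CF k e x m) (N : ℕ) (t : k) : DerivedCategory (ModuleCat.{u} A) :=
  DerivedCategory.Q.obj (fam C N t).K

/-- Cohomology of the objects. -/
noncomputable def XXiso (C : CF k e x m) (N : ℕ) (t : k) (i : ℤ) :
    Hobj A i (XX C N t) ≅ (fam C N t).K.homology i :=
  (DerivedCategory.homologyFunctorFactors (ModuleCat.{u} A) i).app _

theorem Q_full {B : Type u} [Ring B] [HasDerivedCategory.{u} (ModuleCat.{u} B)]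
    (K L : CochainComplex (ModuleCat.{u} B) ℤ) [K.IsKProjective]
    (φ : DerivedCategory.Q.obj K ⟶ DerivedCategory.Q.obj L) :
    ∃ f : K ⟶ L, DerivedCategory.Q.map f = φ := by
  obtain ⟨g, hg⟩ := (CochainComplex.IsKProjective.Qh_map_bijective K
    ((HomotopyCategory.quotient _ _).obj L)).surjective
    ((DerivedCategory.quotientCompQhIso (ModuleCat.{u} B)).hom.app K ≫ φ ≫
      (DerivedCategory.quotientCompQhIso (ModuleCat.{u} B)).inv.app L)
  obtain ⟨f, rfl⟩ := (HomotopyCategory.quotient _ _).map_surjective g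
  refine ⟨f, ?_⟩
  have h1 := DerivedCategory.quotientCompQhIso_hom_naturality f
  rw [hg, Category.assoc, Category.assoc] at h1
  have h2 := (cancel_epi ((DerivedCategory.quotientCompQhIso (ModuleCat.{u} B)).hom.app K)).1 h1
  rw [← h2, Iso.inv_hom_id_app]
  exact Category.comp_id _

theorem XX_full (C : CF k e x m) (N : ℕ) (s t : k) (φ : XX C N s ⟶ XX C N t) :
    ∃ f : (fam C N s).K ⟶ (fam C N t).K, DerivedCategory.Q.map f = φ := by
  have := fam_kproj C N s
  exact Q_full _ _ φ

theorem H_zero (C : CF k e x m) (N : ℕ) (t : k) {i : ℤ} (h : i < -1 ∨ 4 + (N : ℤ) < i) :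
    IsZero (Hobj A i (XX C N t)) := (homology_zero C N t h).of_iso (XXiso C N t i)

theorem H_bot (C : CF k e x m) (N : ℕ) (t : k) : ¬ IsZero (Hobj A (-1) (XX C N t)) :=
  fun h => homology_bot C N t (h.of_iso (XXiso C N t _).symm)

theorem H_top (C : CF k e x m) (N : ℕ) (t : k) : ¬ IsZero (Hobj A (4 + N) (XX C N t)) :=
  fun h => homology_top C N t (h.of_iso (XXiso C N t _).symm)

theorem XX_ne (C : CF k e x m) (N : ℕ) (t : k) : ¬ IsZero (XX C N t) := by
  intro h
  apply H_bot C N t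
  rw [IsZero.iff_id_eq_zero] at h ⊢
  have h2 := congrArg (DerivedCategory.homologyFunctor (ModuleCat.{u} A) (-1)).map h
  rw [CategoryTheory.Functor.map_id, Functor.map_zero] at h2
  exact h2

theorem Q_pow (C : CF k e x m) (N : ℕ) (t : k) (f : End (fam C N t).K) (n : ℕ) :
    DerivedCategory.Q.map (f ^ n : End (fam C N t).K) =
      ((show End (XX C N t) from DerivedCategory.Q.map f) ^ n : End (XX C N t)) :=
  map_pow (DerivedCategory.Q.mapEnd (fam C N t).K) f n

theorem XX_indec (C : CF k e x m) (N : ℕ) (t : k) : Indec (XX C N t) := by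
  refine ⟨XX_ne C N t, fun φ hφ => ?_⟩
  obtain ⟨f, hf⟩ := XX_full C N t t φ
  let ψ : End (XX C N t) := φ
  have hid : IsIdempotentElem ψ := hφ
  rcases end_local C f with hu | ⟨n, hn⟩
  · right
    have h1 : IsUnit ψ := by
      have := hu.map (DerivedCategory.Q.mapEnd (fam C N t).K)
      have h2 : DerivedCategory.Q.mapEnd (fam C N t).K f = ψ := hf
      rwa [h2] at this
    have h3 : ψ * ψ = ψ * 1 := by rw [mul_one]; exact hid
    exact h1.mul_left_cancel h3
  · left
    have h1 := Q_pow C N t f n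
    rw [hn] at h1
    have h2 : ψ ^ n = 0 := by
      have h3 : (show End (XX C N t) from DerivedCategory.Q.map f) = ψ := hf
      rw [h3] at h1
      rw [← h1]
      exact Functor.map_zero _ _ _
    rcases Nat.eq_zero_or_pos n with h0 | h0
    · rw [h0, pow_zero] at h2
      have : ψ = ψ * 1 := (mul_one ψ).symm
      rw [h2, mul_zero] at this
      exact this
    · have := hid.pow_eq h0.ne'
      rw [h2] at this
      exact this.symm

theorem XX_noniso (C : CF k e x m) (N : ℕ) {s t : k} (hst : s ≠ t) :
    IsEmpty (XX C N s ≅ XX C N t) := by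
  refine ⟨fun i => ?_⟩
  obtain ⟨f, hf⟩ := XX_full C N s t i.hom
  obtain ⟨g, hg⟩ := XX_full C N t s i.inv
  obtain ⟨n, hn⟩ := comp_nil C hst f g
  have h1 := Q_pow C N s (show End (fam C N s).K from f ≫ g) n
  rw [hn] at h1
  have h2 : (show End (XX C N s) from DerivedCategory.Q.map (f ≫ g)) = 1 := by
    change DerivedCategory.Q.map (f ≫ g) = 𝟙 (XX C N s)
    rw [Functor.map_comp, hf, hg]
    exact i.hom_inv_id
  have h3 : DerivedCategory.Q.map (0 : (fam C N s).K ⟶ (fam C N s).K) = 𝟙 (XX C N s) := by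
    refine h1.trans ?_
    erw [h2]
    rw [one_pow]; rfl
  rw [Functor.map_zero] at h3
  exact XX_ne C N s ((IsZero.iff_id_eq_zero _).2 h3.symm)

/-- Cohomology of a shift. -/
noncomputable def Hshift (X : DerivedCategory (ModuleCat.{u} A)) (n i : ℤ) :
    Hobj A i (X⟦n⟧) ≅ Hobj A (n + i) X :=
  ((DerivedCategory.homologyFunctor (ModuleCat.{u} A) 0).shiftIso n i (n + i) rfl).app X

theorem XX_noniso_shift (C : CF k e x m) (N : ℕ) {s t : k} (hst : s ≠ t) (n : ℤ) :
    IsEmpty (XX C N s ≅ (XX C N t)⟦n⟧) := by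
  refine ⟨fun i => ?_⟩
  have I (j : ℤ) : Hobj A j (XX C N s) ≅ Hobj A (n + j) (XX C N t) :=
    (DerivedCategory.homologyFunctor (ModuleCat.{u} A) j).mapIso i ≪≫ Hshift _ n j
  have h1 : 0 ≤ n := by
    by_contra h
    exact H_bot C N s ((H_zero C N t (Or.inl (by omega))).of_iso (I (-1)))
  have h2 : n ≤ 0 := by
    by_contra h
    exact H_top C N s ((H_zero C N t (Or.inr (by omega))).of_iso (I (4 + N)))
  obtain rfl : n = 0 := le_antisymm h2 h1
  exact (XX_noniso C N hst).false (i ≪≫ (shiftFunctorZero (DerivedCategory (ModuleCat.{u} A)) ℤ).app _)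

theorem H_dim (C : CF k e x m) (N : ℕ) (t : k) (i : ℤ) :
    FiniteDimensional k (rk k (Hobj A i (XX C N t))) ∧
    Module.finrank k (rk k (Hobj A i (XX C N t))) ≤
      Module.finrank k (rk k (ModuleCat.of A (Idx N → A))) := by
  have h1 := homology_dim C N t i
  have := h1.1
  have h2 := rk_mono k (XXiso C N t i).hom
  exact ⟨h2.1, h2.2.trans h1.2⟩

theorem XX_Db (C : CF k e x m) (N : ℕ) (t : k) : InDb k A (XX C N t) :=
  ⟨⟨-1, 4 + N, fun _ h => H_zero C N t h⟩, fun i => (H_dim C N t i).1⟩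

theorem XX_hr (C : CF k e x m) (N : ℕ) (t : k) :
    N ≤ hr k A (XX C N t) ∧
    hr k A (XX C N t) ≤ (N + 6) * Module.finrank k (rk k (ModuleCat.of A (Idx N → A))) := by
  have rng (i : ℤ) (h : ¬ IsZero (Hobj A i (XX C N t))) : -1 ≤ i ∧ i ≤ 4 + N := by
    constructor
    · by_contra hh
      exact h (H_zero C N t (Or.inl (by omega)))
    · by_contra hh
      exact h (H_zero C N t (Or.inr (by omega)))
  have w1 : hw A (XX C N t) ≤ N + 6 := by
    apply csSup_le'
    rintro n ⟨i, j, hi, hj, hn⟩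
    have := rng i hi
    have := rng j hj
    omega
  have w2 : N ≤ hw A (XX C N t) := by
    refine le_trans (Nat.le_add_right N 6) (le_csSup ⟨N + 6, ?_⟩ ?_)
    · rintro n ⟨i, j, hi, hj, hn⟩
      have := rng i hi
      have := rng j hj
      omega
    · exact ⟨-1, 4 + N, H_bot C N t, H_top C N t, by push_cast; ring⟩
  have l1 : hl k A (XX C N t) ≤ Module.finrank k (rk k (ModuleCat.of A (Idx N → A))) := by
    apply csSup_le'
    rintro n ⟨i, rfl⟩
    exact (H_dim C N t i).2
  have l2 : 1 ≤ hl k A (XX C N t) := by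
    refine le_trans ?_ (le_csSup (a := hdim k A (-1) (XX C N t))
      ⟨Module.finrank k (rk k (ModuleCat.of A (Idx N → A))), ?_⟩ ⟨-1, rfl⟩)
    · have := (H_dim C N t (-1)).1
      have hnt : Nontrivial (rk k (Hobj A (-1) (XX C N t))) := by
        by_contra hc
        rw [not_nontrivial_iff_subsingleton] at hc
        have hc' : Subsingleton (Hobj A (-1) (XX C N t)) := hc
        exact H_bot C N t (ModuleCat.isZero_of_subsingleton _)
      exact Module.finrank_pos (R := k) (M := rk k (Hobj A (-1) (XX C N t)))
    · rintro n ⟨i, rfl⟩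
      exact (H_dim C N t i).2
  exact ⟨by rw [hr]; simpa using Nat.mul_le_mul w2 l2, Nat.mul_le_mul w1 l1⟩

theorem sdu (C : CF k e x m) : StronglyDerivedUnbounded k A := by
  have hk : Infinite k := inferInstance
  -- for every N there is a range value attained infinitely often
  have key (N : ℕ) : ∃ r : ℕ, N ≤ r ∧ {t : k | hr k A (XX C N t) = r}.Infinite := by
    let B := (N + 6) * Module.finrank k (rk k (ModuleCat.of A (Idx N → A)))
    let F : k → Fin (B + 1) := fun t => ⟨hr k A (XX C N t), Nat.lt_succ_of_le (XX_hr C N t).2⟩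
    obtain ⟨y, hy⟩ := Finite.exists_infinite_fiber F
    have hy' := Set.infinite_coe_iff.1 hy
    refine ⟨y, ?_, ?_⟩
    · obtain ⟨t, ht⟩ := hy'.nonempty
      have h1 : hr k A (XX C N t) = y := congrArg Fin.val ht
      rw [← h1]
      exact (XX_hr C N t).1
    · refine hy'.mono ?_
      intro t ht
      exact congrArg Fin.val ht
  choose ρ hρ1 hρ2 using key
  have hinf : (Set.range ρ).Infinite := by
    intro hfin
    obtain ⟨b, hb⟩ := hfin.bddAbove
    have h1 := hb ⟨b + 1, rfl⟩
    have h2 := hρ1 (b + 1)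
    omega
  refine ⟨Nat.nth (· ∈ Set.range ρ), Nat.nth_strictMono hinf, fun i => ?_⟩
  obtain ⟨N, hN⟩ : Nat.nth (· ∈ Set.range ρ) i ∈ Set.range ρ :=
    Nat.nth_mem_of_infinite hinf i
  let τ := Set.Infinite.natEmbedding _ (hρ2 N)
  refine ⟨fun j => XX C N (τ j), fun j => ⟨XX_indec C N _, XX_Db C N _, ?_⟩, ?_⟩
  · rw [← hN]
    exact (τ j).2
  · intro j j' hj n
    exact XX_noniso_shift C N (fun h => hj (τ.injective (Subtype.ext h))) n

theorem main_aux (hrf : IsRepFinite k A) (e : A) (he : IsPrimitiveIdem A e) :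
    ∃ (m : ℕ) (x : A), 1 ≤ m ∧
      e * x * e = x ∧ x ^ m = 0 ∧
      LinearIndependent k (fun i : Fin m => e * x ^ (i : ℕ)) ∧
      (∀ y : A, e * y * e ∈ Submodule.span k (Set.range fun i : Fin m => e * x ^ (i : ℕ))) ∧
      (¬ StronglyDerivedUnbounded k A → m ≤ 2) := by
  obtain ⟨m, x, h1, h2, h3, h4, h5⟩ := part_one hrf e he
  refine ⟨m, x, h1, h2, h3, h4, h5, fun hn => ?_⟩
  by_contra hm
  apply hn
  have hm3 : 3 ≤ m := by omega
  obtain ⟨comm, p, q, u, w, uw, pm, pe, pz⟩ := exists_coef he.1 h2 h3 h4 h5 hm3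
  have hx1 : x ^ (m - 1) ≠ 0 := by
    intro h0
    have := h4.ne_zero ⟨m - 1, by omega⟩
    simp only [h0, mul_zero] at this
    exact this rfl
  exact sdu (e := e) (x := x) (m := m)
    ⟨he.1, h2, h3, hx1, hm3, comm, p, q, u, w, uw, pm, pe, pz⟩

end der
end
end CornerAux

theorem corner_algebra_uniserial_of_repFinite
    (hrf : IsRepFinite k A) (e : A) (he : IsPrimitiveIdem A e) :
    ∃ (m : ℕ) (x : A), 1 ≤ m ∧
      e * x * e = x ∧ x ^ m = 0 ∧
      LinearIndependent k (fun i : Fin m => e * x ^ (i : ℕ)) ∧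
      (∀ y : A, e * y * e ∈ Submodule.span k (Set.range fun i : Fin m => e * x ^ (i : ℕ))) ∧
      (¬ StronglyDerivedUnbounded k A → m ≤ 2) := by
  exact CornerAux.main_aux hrf e he

end
end
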